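/- arXiv:1103.2419 — 7 statements merged into one kernel-verified Lean document; each statement's English description precedes it below -/
import Mathlib

section
/- For every integer n ≥ 5, the Roman domination number of the generalized Petersen graph P(n,2) equals ⌈8n/7⌉. -/
/-!
A vertex function on `P(n,2)` is read as a cyclic word of `n` columns `(f v_i, f u_i)`.
Being a Roman domination function is a condition on five consecutive columns.

*Lower bound.* Scan the columns from left to right and record, for each of `v_i`, `u_i` and
`u_{i-1}`, whether it has value `2`, is already satisfied (value `1`, or a neighbour of value `2`
to the left or in its own column), or still needs the neighbour to its right to have value `2`.
This gives `27` scanning states. There is an integer potential `potential` on them such that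
appending a column `(v, u)` changes it by at most `7 (v + u) - 8` (`potential_step`); summing
around the cycle, the potentials cancel and `8 n ≤ 7 w` remains for a function of weight `w`
(`eight_mul_le_weight`).

*Upper bound.* The cyclic word of seven columns `block` has weight `8`, and it can be inserted in
front of any admissible cyclic word that agrees with it in its first four columns: each window of
five columns of the longer word is a window of the shorter word or of the periodic repetition of
`block` (`IsCyclicWord.insert`). Explicit words of lengths `6, …, 12` therefore give words of
weight `⌈8n/7⌉` for every `n ≥ 6`; length `5` is treated by a separate word.
-/


/-- The generalized Petersen graph `P(n,k)`: vertices `Sum.inl i` are the outer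
vertices `v_i` and `Sum.inr i` are the inner vertices `u_i` (indices in `ZMod n`);
edges are `v_i v_{i+1}`, `v_i u_i` and `u_i u_{i+k}`. -/
def petersen (n k : ℕ) : SimpleGraph (ZMod n ⊕ ZMod n) :=
  SimpleGraph.fromRel fun a b =>
    match a, b with
    | Sum.inl i, Sum.inl j => j = i + 1
    | Sum.inl i, Sum.inr j => j = i
    | Sum.inr i, Sum.inr j => j = i + (k : ZMod n)
    | _, _ => False

/-- `f` is a Roman domination function on `G`. -/
def IsRDF {V : Type*} (G : SimpleGraph V) (f : V → ℕ) : Prop :=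
  (∀ v, f v ≤ 2) ∧ ∀ v, f v = 0 → ∃ u, G.Adj v u ∧ f u = 2

/-- The weight of a function on the vertices. -/
noncomputable def weight {V : Type*} (f : V → ℕ) : ℕ := ∑ᶠ v, f v

/-- The Roman domination number of `G`. -/
noncomputable def romanDomNum {V : Type*} (G : SimpleGraph V) : ℕ :=
  sInf {w | ∃ f : V → ℕ, IsRDF G f ∧ weight f = w}

/-- `f` is a `γ_R`-function of `G`: an RDF of minimum weight. -/
def IsGammaRFun {V : Type*} (G : SimpleGraph V) (f : V → ℕ) : Prop :=
  IsRDF G f ∧ weight f = romanDomNum G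

/-- `S` is a dominating set of `G`. -/
def IsDomSet {V : Type*} (G : SimpleGraph V) (S : Set V) : Prop :=
  ∀ v, v ∈ S ∨ ∃ u ∈ S, G.Adj u v

/-- The domination number of `G`. -/
noncomputable def domNum {V : Type*} (G : SimpleGraph V) : ℕ :=
  sInf {k | ∃ S : Set V, IsDomSet G S ∧ S.ncard = k}

/-- The function `g_f` associated to an RDF `f` on `P(n,2)`. -/
noncomputable def gf (n : ℕ) (f : ZMod n ⊕ ZMod n → ℕ) (w : ZMod n ⊕ ZMod n) : ℚ :=
  if f w = 2 then 1/2
  else if f w = 1 then 1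
  else (1/2) * (((petersen n 2).neighborSet w) ∩ {u | f u = 2}).ncard

/-- `r_f(S) = Σ_{w ∈ S} (g_f(w) - 1/2)`. -/
noncomputable def rfSum (n : ℕ) (f : ZMod n ⊕ ZMod n → ℕ) (S : Set (ZMod n ⊕ ZMod n)) : ℚ :=
  ∑ᶠ w ∈ S, (gf n f w - 1/2)

/-- The block `V'(i,t) = {v_j, u_j : i ≤ j ≤ i+t-1}`, indices modulo `n`. -/
def Vblock (n : ℕ) (i : ℤ) (t : ℕ) : Set (ZMod n ⊕ ZMod n) :=
  {w | ∃ j : ℤ, i ≤ j ∧ j ≤ i + t - 1 ∧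
    (w = Sum.inl ((j : ℤ) : ZMod n) ∨ w = Sum.inr ((j : ℤ) : ZMod n))}

/-- `f` has minimum cardinality of `V₂` among `γ_R`-functions of `P(n,2)`. -/
def MinV2 (n : ℕ) (f : ZMod n ⊕ ZMod n → ℕ) : Prop :=
  ∀ f' : ZMod n ⊕ ZMod n → ℕ, IsGammaRFun (petersen n 2) f' →
    {v | f v = 2}.ncard ≤ {v | f' v = 2}.ncard

/-! ### The local structure of `P(n,2)` -/

lemma petersen_adj_inl {n : ℕ} {i : ZMod n} {w : ZMod n ⊕ ZMod n}
    (h : (petersen n 2).Adj (Sum.inl i) w) :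
    w = Sum.inl (i - 1) ∨ w = Sum.inl (i + 1) ∨ w = Sum.inr i := by
  rcases w with j | j <;> simp [petersen] at h ⊢
  · rcases h.2 with h | h
    · exact Or.inr h
    · left; rw [h]; ring
  · exact h

lemma petersen_adj_inr {n : ℕ} {i : ZMod n} {w : ZMod n ⊕ ZMod n}
    (h : (petersen n 2).Adj (Sum.inr i) w) :
    w = Sum.inr (i - 2) ∨ w = Sum.inr (i + 2) ∨ w = Sum.inl i := by
  rcases w with j | j <;> simp [petersen] at h ⊢
  · exact h.symm
  · rcases h.2 with h | h
    · exact Or.inr h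
    · left; rw [h]; ring

lemma weight_eq_sum {n : ℕ} [NeZero n] (f : ZMod n ⊕ ZMod n → ℕ) :
    weight f = ∑ i : ZMod n, (f (Sum.inl i) + f (Sum.inr i)) := by
  rw [weight, finsum_eq_sum_of_fintype, Fintype.sum_sum_type, Finset.sum_add_distrib]

/-! ### The lower bound -/

/-- The scanning status of a vertex of value `x`, where `p` says whether one of the neighbours
scanned so far has value `2`: `2` if the value is `2`, `1` if the vertex is already satisfied,
and `0` if it still waits for a neighbour of value `2`. -/
def scanStatus (x : Fin 3) (p : Prop) [Decidable p] : Fin 3 :=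
  if x = 2 then 2 else if x = 1 ∨ p then 1 else 0

lemma scanStatus_eq_two {x : Fin 3} {p : Prop} [Decidable p] : scanStatus x p = 2 ↔ x = 2 := by
  unfold scanStatus; split_ifs <;> simp_all

lemma scanStatus_eq_zero {x : Fin 3} {p : Prop} [Decidable p] (h : scanStatus x p = 0) :
    x = 0 ∧ ¬ p := by
  unfold scanStatus at h
  split_ifs at h with h1 h2
  · exact absurd h (by decide)
  · exact absurd h (by decide)
  · push Not at h2
    exact ⟨by have := h2.1; omega, h2.2⟩

/-- A potential on the scanning states, given by the statuses of `v_i`, `u_i` and `u_{i-1}`: the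
least total of `7 (v + u) - 8` over the columns `(v, u)` of a possibly empty scan that starts
anywhere and ends in the given state. -/
def potential : Fin 3 → Fin 3 → Fin 3 → ℤ :=
  ![![![-26, -19, -15], ![-19, -16, -15], ![0, 0, 0]],
    ![![-19, -18, -8], ![-12, -11, -8], ![-13, -7, -7]],
    ![![0, 0, 0], ![-13, -10, -1], ![-6, 0, 0]]]

/-- Appending a column `(v, u)` to the state `(a, b, c)` is allowed when it serves the pending
`v_i` and `u_{i-1}`, which have no neighbour in any later column. -/
lemma potential_step : ∀ a b c v u : Fin 3, (a = 0 → v = 2) → (c = 0 → u = 2) →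
    8 + potential (scanStatus v (a = 2 ∨ u = 2)) (scanStatus u (c = 2 ∨ v = 2)) b
      ≤ 7 * ((v.val + u.val : ℕ) : ℤ) + potential a b c := by
  decide

lemma eight_mul_le_weight {n : ℕ} [NeZero n] {f : ZMod n ⊕ ZMod n → ℕ}
    (hf : IsRDF (petersen n 2) f) : 8 * n ≤ 7 * weight f := by
  let V : ZMod n → Fin 3 := fun i => ⟨f (Sum.inl i), by have := hf.1 (Sum.inl i); omega⟩
  let U : ZMod n → Fin 3 := fun i => ⟨f (Sum.inr i), by have := hf.1 (Sum.inr i); omega⟩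
  have hV : ∀ i, V i = 0 → V (i - 1) = 2 ∨ V (i + 1) = 2 ∨ U i = 2 := by
    intro i hi
    obtain ⟨w, hw, h2⟩ := hf.2 (Sum.inl i) (congrArg Fin.val hi)
    rcases petersen_adj_inl hw with rfl | rfl | rfl
    · exact Or.inl (Fin.ext h2)
    · exact Or.inr (Or.inl (Fin.ext h2))
    · exact Or.inr (Or.inr (Fin.ext h2))
  have hU : ∀ i, U i = 0 → U (i - 2) = 2 ∨ U (i + 2) = 2 ∨ V i = 2 := by
    intro i hi
    obtain ⟨w, hw, h2⟩ := hf.2 (Sum.inr i) (congrArg Fin.val hi)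
    rcases petersen_adj_inr hw with rfl | rfl | rfl
    · exact Or.inl (Fin.ext h2)
    · exact Or.inr (Or.inl (Fin.ext h2))
    · exact Or.inr (Or.inr (Fin.ext h2))
  let a : ZMod n → Fin 3 := fun i => scanStatus (V i) (V (i - 1) = 2 ∨ U i = 2)
  let b : ZMod n → Fin 3 := fun i => scanStatus (U i) (U (i - 2) = 2 ∨ V i = 2)
  let Φ : ZMod n → ℤ := fun i => potential (a i) (b i) (b (i - 1))
  have hstep : ∀ i, 8 + Φ (i + 1) ≤
      7 * ((f (Sum.inl (i + 1)) + f (Sum.inr (i + 1)) : ℕ) : ℤ) + Φ i := by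
    intro i
    have h := potential_step (a i) (b i) (b (i - 1)) (V (i + 1)) (U (i + 1))
      (fun h => by
        obtain ⟨h0, h1⟩ := scanStatus_eq_zero h
        have := hV i h0
        tauto)
      (fun h => by
        obtain ⟨h0, h1⟩ := scanStatus_eq_zero h
        have := hU (i - 1) h0
        rw [show i - 1 + 2 = i + 1 by ring] at this
        tauto)
    have ha : a i = 2 ↔ V (i + 1 - 1) = 2 := by
      rw [add_sub_cancel_right]; exact scanStatus_eq_two
    have hb : b (i - 1) = 2 ↔ U (i + 1 - 2) = 2 := by
      rw [show i + 1 - 2 = i - 1 by ring]; exact scanStatus_eq_two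
    simp only [ha, hb] at h
    have hΦ : Φ (i + 1) = potential (a (i + 1)) (b (i + 1)) (b i) := by
      simp only [Φ, add_sub_cancel_right]
    rw [hΦ]
    exact h
  have hsum := Finset.sum_le_sum fun (i : ZMod n) (_ : i ∈ Finset.univ) => hstep i
  have hshift : ∀ g : ZMod n → ℤ, ∑ i, g (i + 1) = ∑ i, g i :=
    Equiv.sum_comp (Equiv.addRight (1 : ZMod n))
  rw [Finset.sum_add_distrib, Finset.sum_add_distrib, hshift Φ, ← Finset.mul_sum,
    hshift fun i => ((f (Sum.inl i) + f (Sum.inr i) : ℕ) : ℤ), ← Nat.cast_sum,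
    ← weight_eq_sum] at hsum
  simp only [Finset.sum_const, Finset.card_univ, ZMod.card, nsmul_eq_mul] at hsum
  omega

/-! ### The upper bound -/

/-- The Roman domination condition at the two vertices of the middle column `r` of five
consecutive columns `p, q, r, s, t`; a column is a pair (outer value, inner value). -/
def WindowOK (p q r s t : ℕ × ℕ) : Prop :=
  r.1 ≤ 2 ∧ r.2 ≤ 2 ∧ (r.1 = 0 → q.1 = 2 ∨ s.1 = 2 ∨ r.2 = 2) ∧
    (r.2 = 0 → p.2 = 2 ∨ t.2 = 2 ∨ r.1 = 2)

instance (p q r s t : ℕ × ℕ) : Decidable (WindowOK p q r s t) := by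
  unfold WindowOK; infer_instance

/-- The columns `c 0, …, c (n - 1)` form an admissible cyclic word of length `n` and weight `w`.
The word is written out with its first four columns repeated at the end, so that every window of
five cyclically consecutive columns starts at some `j < n`. -/
structure IsCyclicWord (n w : ℕ) (c : ℕ → ℕ × ℕ) : Prop where
  wrap : ∀ i < 4, c (n + i) = c i
  window : ∀ j < n, WindowOK (c j) (c (j + 1)) (c (j + 2)) (c (j + 3)) (c (j + 4))
  sum_eq : ∑ j ∈ Finset.range n, ((c j).1 + (c j).2) = w

/-- A cyclic word of length `n > 4` yields a Roman domination function of `P(n,2)`. -/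
lemma IsCyclicWord.exists_rdf {n w : ℕ} (hn : 5 ≤ n) {c : ℕ → ℕ × ℕ} (h : IsCyclicWord n w c) :
    ∃ f, IsRDF (petersen n 2) f ∧ weight f = w := by
  have : NeZero n := ⟨by omega⟩
  have : Fact (1 < n) := ⟨by omega⟩
  have hshift : ∀ (j : ZMod n) (t : ℕ), t ≤ 4 → c (j + t).val = c (j.val + t) := by
    intro j t ht
    have hj := j.val_lt
    have hval : (j + t).val = (j.val + t) % n := by
      rw [ZMod.val_add, ZMod.val_natCast, Nat.add_mod_mod]
    rcases lt_or_ge (j.val + t) n with hlt | hge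
    · rw [hval, Nat.mod_eq_of_lt hlt]
    · rw [hval, Nat.mod_eq_sub_mod hge, Nat.mod_eq_of_lt (by omega),
        ← h.wrap (j.val + t - n) (by omega)]
      congr 1; omega
  have hwin : ∀ i : ZMod n, WindowOK (c (i - 2).val) (c (i - 1).val) (c i.val)
      (c (i + 1).val) (c (i + 2).val) := by
    intro i
    have h0 := h.window (i - 2).val (i - 2).val_lt
    rw [← hshift _ 1 (by norm_num), ← hshift _ 2 (by norm_num), ← hshift _ 3 (by norm_num),
      ← hshift _ 4 (by norm_num)] at h0
    convert h0 using 3 <;> push_cast <;> ring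
  have h1 : (1 : ZMod n) ≠ 0 := by
    intro h
    have := congrArg ZMod.val h
    rw [ZMod.val_one, ZMod.val_zero] at this
    omega
  have h2 : (2 : ZMod n) ≠ 0 := by
    intro h
    have := congrArg ZMod.val h
    rw [ZMod.val_zero, ← Nat.cast_ofNat, ZMod.val_natCast, Nat.mod_eq_of_lt (by omega)] at this
    omega
  refine ⟨Sum.elim (fun i => (c i.val).1) (fun i => (c i.val).2), ⟨?_, ?_⟩, ?_⟩
  · rintro (i | i)
    · exact (hwin i).1
    · exact (hwin i).2.1
  · rintro (i | i) hi
    · rcases (hwin i).2.2.1 hi with h | h | h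
      · exact ⟨Sum.inl (i - 1), by simp [petersen, eq_sub_iff_add_eq, h1], h⟩
      · exact ⟨Sum.inl (i + 1), by simp [petersen, h1], h⟩
      · exact ⟨Sum.inr i, by simp [petersen], h⟩
    · rcases (hwin i).2.2.2 hi with h | h | h
      · exact ⟨Sum.inr (i - 2), by simp [petersen, eq_sub_iff_add_eq, h2], h⟩
      · exact ⟨Sum.inr (i + 2), by simp [petersen, h2], h⟩
      · exact ⟨Sum.inl i, by simp [petersen], h⟩
  · rw [weight_eq_sum, ← h.sum_eq]
    simp only [Sum.elim_inl, Sum.elim_inr]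
    refine Finset.sum_bij (fun i _ => i.val) (fun i _ => Finset.mem_range.2 i.val_lt)
      (fun i _ j _ hij => ZMod.val_injective n hij)
      (fun k hk => ⟨(k : ZMod n), Finset.mem_univ _, ?_⟩) (fun i _ => rfl)
    rw [ZMod.val_natCast, Nat.mod_eq_of_lt (Finset.mem_range.1 hk)]

/-- The periodic extension of a list of columns to all indices. -/
def cycleOf (l : List (ℕ × ℕ)) (j : ℕ) : ℕ × ℕ := l.getD (j % l.length) (0, 0)

/-- The periodic word of length `7` and weight `8` realizing the optimal density `8/7`. -/
def block : ℕ → ℕ × ℕ := cycleOf [(0, 2), (1, 0), (0, 0), (2, 0), (0, 0), (1, 0), (0, 2)]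

/-- Inserting one copy of `block` in front of a cyclic word that starts like `block`. -/
lemma IsCyclicWord.insert {n w : ℕ} {c : ℕ → ℕ × ℕ} (h : IsCyclicWord n w c)
    (hc : ∀ i < 4, c i = block i) :
    ∃ cc, IsCyclicWord (n + 7) (w + 8) cc ∧ ∀ i < 4, cc i = block i := by
  let cc : ℕ → ℕ × ℕ := fun j => if j < 7 then block j else c (j - 7)
  have hadd : ∀ j, cc (j + 7) = c j := by intro j; simp [cc]
  -- The first eleven columns of `cc` are those of the periodic word `block`.
  have hlow : ∀ j < 11, cc j = block j := by
    intro j hj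
    by_cases h7 : j < 7
    · simp [cc, h7]
    · obtain ⟨k, rfl⟩ : ∃ k, j = k + 7 := ⟨j - 7, by omega⟩
      rw [hadd, hc k (by omega)]
      simp [block, cycleOf]
  refine ⟨cc, ⟨?_, ?_, ?_⟩, fun i hi => hlow i (by omega)⟩
  · intro i hi
    rw [show n + 7 + i = n + i + 7 by ring, hadd, h.wrap i hi, hc i hi, hlow i (by omega)]
  · intro j hj
    by_cases h7 : j < 7
    · rw [hlow j (by omega), hlow (j + 1) (by omega), hlow (j + 2) (by omega),
        hlow (j + 3) (by omega), hlow (j + 4) (by omega)]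
      clear hj
      revert j
      decide
    · obtain ⟨k, rfl⟩ : ∃ k, j = k + 7 := ⟨j - 7, by omega⟩
      have := h.window k (by omega)
      rw [← hadd k, ← hadd (k + 1), ← hadd (k + 2), ← hadd (k + 3), ← hadd (k + 4)] at this
      simpa only [Nat.add_right_comm _ 7] using this
  · rw [add_comm n 7, Finset.sum_range_add, ← h.sum_eq, add_comm]
    congr 1
    refine Finset.sum_congr rfl fun j _ => ?_
    rw [add_comm 7 j, hadd]

/-- A word of length `n` and weight `⌈8n/7⌉` that starts like `block`; natural-number division
by `7` makes `(8 * n + 6) / 7` this ceiling. -/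
lemma exists_cyclicWord (n : ℕ) (hn : 6 ≤ n) :
    ∃ c, IsCyclicWord n ((8 * n + 6) / 7) c ∧ ∀ i < 4, c i = block i := by
  induction n using Nat.strong_induction_on with
  | _ n ih =>
    rcases lt_or_ge n 13 with hlt | hge
    · clear ih
      interval_cases n
      · exact ⟨cycleOf [(0, 2), (1, 0), (0, 0), (2, 0), (0, 0), (0, 2)],
          ⟨by decide, by decide, by decide⟩, by decide⟩
      · exact ⟨block, ⟨by decide, by decide, by decide⟩, by decide⟩
      · exact ⟨cycleOf [(0, 2), (1, 0), (0, 0), (2, 0), (0, 0), (1, 0), (0, 2), (0, 2)],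
          ⟨by decide, by decide, by decide⟩, by decide⟩
      · exact ⟨cycleOf [(0, 2), (1, 0), (0, 0), (2, 0), (0, 1), (2, 0), (0, 0), (1, 0), (0, 2)],
          ⟨by decide, by decide, by decide⟩, by decide⟩
      · exact ⟨cycleOf [(0, 2), (1, 0), (0, 0), (2, 0), (0, 1), (0, 1), (2, 0), (0, 0), (1, 0),
          (0, 2)], ⟨by decide, by decide, by decide⟩, by decide⟩
      · exact ⟨cycleOf [(0, 2), (1, 0), (0, 0), (2, 0), (0, 0), (0, 2), (0, 2), (0, 0), (2, 0),
          (0, 0), (0, 2)], ⟨by decide, by decide, by decide⟩, by decide⟩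
      · exact ⟨cycleOf [(0, 2), (1, 0), (0, 0), (2, 0), (0, 0), (1, 0), (0, 2), (0, 2), (0, 0),
          (2, 0), (0, 0), (0, 2)], ⟨by decide, by decide, by decide⟩, by decide⟩
    · obtain ⟨m, rfl⟩ : ∃ m, n = m + 7 := ⟨n - 7, by omega⟩
      obtain ⟨c, h, hc⟩ := ih m (by omega) (by omega)
      rw [show (8 * (m + 7) + 6) / 7 = (8 * m + 6) / 7 + 8 by omega]
      exact h.insert hc

lemma exists_rdf (n : ℕ) (hn : 5 ≤ n) :
    ∃ f, IsRDF (petersen n 2) f ∧ weight f = (8 * n + 6) / 7 := by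
  rcases hn.eq_or_lt with rfl | h6
  · exact IsCyclicWord.exists_rdf (c := cycleOf [(0, 0), (0, 0), (2, 0), (0, 2), (2, 0)]) le_rfl
      ⟨by decide, by decide, by decide⟩
  · obtain ⟨c, h, -⟩ := exists_cyclicWord n h6
    exact h.exists_rdf hn

/-! ### The Roman domination number -/

/-- For every integer `n ≥ 5`, the Roman domination number of the generalized
Petersen graph `P(n,2)` equals `⌈8n/7⌉`. -/
theorem roman_domination_number_petersen_n_2 (n : ℕ) (hn : 5 ≤ n) :
    (romanDomNum (petersen n 2) : ℤ) = ⌈(8 * (n : ℚ)) / 7⌉ := by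
  have : NeZero n := ⟨by omega⟩
  have hr : romanDomNum (petersen n 2) = (8 * n + 6) / 7 := by
    refine le_antisymm (Nat.sInf_le (exists_rdf n hn)) (le_csInf ⟨_, exists_rdf n hn⟩ ?_)
    rintro w ⟨f, hf, rfl⟩
    have := eight_mul_le_weight hf
    omega
  rw [hr, eq_comm, Int.ceil_eq_iff]
  have h1 : 8 * n ≤ 7 * ((8 * n + 6) / 7) := by omega
  have h2 : 7 * ((8 * n + 6) / 7) < 8 * n + 7 := by omega
  generalize (8 * n + 6) / 7 = k at h1 h2
  have h1' : 8 * (n : ℚ) ≤ 7 * k := by exact_mod_cast h1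
  have h2' : 7 * (k : ℚ) < 8 * n + 7 := by exact_mod_cast h2
  push_cast
  constructor <;> linarith
end

section
/- For every integer n ≥ 5, the Roman domination number of the generalized Petersen graph P(n,2) is at most ⌈8n/7⌉. -/
/-- `i` and `j` are at cyclic distance `k` modulo `n`. Written without `%`, for indices below `n`
and `k ≤ n`, so that it is linear arithmetic in all variables. -/
def CycStep (n k i j : ℕ) : Prop :=
  j = i + k ∨ i = j + k ∨ j + n = i + k ∨ i + n = j + k

instance (n k i j : ℕ) : Decidable (CycStep n k i j) := by
  unfold CycStep; infer_instance

/-- The columns `(a i, b i)`, `i < n`, are the values `(f v_i, f u_i)` of a Roman domination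
function on `P(n,2)`, and they satisfy the boundary conditions under which the block `W` can be
put in front. -/
structure GoodWord (n : ℕ) (a b : ℕ → ℕ) : Prop where
  le_two : ∀ i < n, a i ≤ 2 ∧ b i ≤ 2
  outer : ∀ i < n, a i = 0 → b i = 2 ∨ ∃ j < n, CycStep n 1 i j ∧ a j = 2
  inner : ∀ i < n, b i = 0 → a i = 2 ∨ ∃ j < n, CycStep n 2 i j ∧ b j = 2
  outer_last : a (n - 1) = 2
  inner_first : b 0 ≠ 2
  inner_last : b (n - 1) ≠ 2
  inner_last' : b (n - 2) ≠ 2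

/-- The outer values of the block `W`. -/
def blockOuter : List ℕ := [0, 1, 0, 0, 1, 0, 2]

/-- The inner values of the block `W`. -/
def blockInner : List ℕ := [0, 0, 2, 2, 0, 0, 0]

/-- The word `a` with the seven letters of `l` put in front. -/
def prepend (l : List ℕ) (a : ℕ → ℕ) (i : ℕ) : ℕ :=
  if i < 7 then l.getD i 0 else a (i - 7)

lemma prepend_add (l : List ℕ) (a : ℕ → ℕ) (i : ℕ) : prepend l a (i + 7) = a i := by
  simp [prepend]

/-- Inside `W` every vertex of value `0` except the first outer one is dominated from within `W`,
and that one is dominated by the last outer vertex of the old word. In the old word, the dominations that run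
across the cut either remain valid, since `W` also ends with outer value `2`, or are excluded by
the boundary conditions. -/
lemma GoodWord.prepend {n : ℕ} (hn : 5 ≤ n) {a b : ℕ → ℕ} (h : GoodWord n a b) :
    GoodWord (n + 7) (prepend blockOuter a) (prepend blockInner b) := by
  obtain ⟨hle, hout, hinn, hlast, hb0, hb1, hb2⟩ := h
  have ha6 : _root_.prepend blockOuter a 6 = 2 := rfl
  refine ⟨?_, ?_, ?_, ?_, ?_, ?_, ?_⟩
  · intro i hi
    rcases Nat.lt_or_ge i 7 with h7 | h7
    · interval_cases i <;> simp [_root_.prepend, blockOuter, blockInner]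
    · obtain ⟨i, rfl⟩ := Nat.exists_eq_add_of_le' h7
      simpa only [prepend_add] using hle i (by omega)
  · intro i hi h0
    rcases Nat.lt_or_ge i 7 with h7 | h7
    · have key : ∀ j < 7, CycStep (n + 7) 1 i j → _root_.prepend blockOuter a j = 2 →
          ∃ j < n + 7, CycStep (n + 7) 1 i j ∧ _root_.prepend blockOuter a j = 2 :=
        fun j hj h1 h2 => ⟨j, by omega, h1, h2⟩
      interval_cases i
      · refine Or.inr ⟨n - 1 + 7, by omega, by unfold CycStep; omega, ?_⟩
        rw [prepend_add, hlast]
      · exact absurd h0 (by simp [_root_.prepend, blockOuter])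
      · exact Or.inl rfl
      · exact Or.inl rfl
      · exact absurd h0 (by simp [_root_.prepend, blockOuter])
      · exact Or.inr (key 6 (by omega) (by unfold CycStep; omega) rfl)
      · exact absurd h0 (by simp [_root_.prepend, blockOuter])
    · obtain ⟨i, rfl⟩ := Nat.exists_eq_add_of_le' h7
      rw [prepend_add] at h0 ⊢
      obtain hb | ⟨j, hj, hs, ha⟩ := hout i (by omega) h0
      · exact Or.inl hb
      right
      obtain hs | hs | hs | hs := hs
      · exact ⟨j + 7, by omega, by unfold CycStep; omega, by rwa [prepend_add]⟩
      · exact ⟨j + 7, by omega, by unfold CycStep; omega, by rwa [prepend_add]⟩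
      · obtain rfl : i = n - 1 := by omega
        omega
      · exact ⟨6, by omega, by unfold CycStep; omega, ha6⟩
  · intro i hi h0
    rcases Nat.lt_or_ge i 7 with h7 | h7
    · have key : ∀ j < 7, CycStep (n + 7) 2 i j → _root_.prepend blockInner b j = 2 →
          ∃ j < n + 7, CycStep (n + 7) 2 i j ∧ _root_.prepend blockInner b j = 2 :=
        fun j hj h1 h2 => ⟨j, by omega, h1, h2⟩
      interval_cases i
      · exact Or.inr (key 2 (by omega) (by unfold CycStep; omega) rfl)
      · exact Or.inr (key 3 (by omega) (by unfold CycStep; omega) rfl)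
      · exact absurd h0 (by simp [_root_.prepend, blockInner])
      · exact absurd h0 (by simp [_root_.prepend, blockInner])
      · exact Or.inr (key 2 (by omega) (by unfold CycStep; omega) rfl)
      · exact Or.inr (key 3 (by omega) (by unfold CycStep; omega) rfl)
      · exact Or.inl rfl
    · obtain ⟨i, rfl⟩ := Nat.exists_eq_add_of_le' h7
      rw [prepend_add] at h0 ⊢
      obtain ha | ⟨j, hj, hs, hb⟩ := hinn i (by omega) h0
      · exact Or.inl ha
      obtain hs | hs | hs | hs := hs
      · exact Or.inr ⟨j + 7, by omega, by unfold CycStep; omega, by rwa [prepend_add]⟩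
      · exact Or.inr ⟨j + 7, by omega, by unfold CycStep; omega, by rwa [prepend_add]⟩
      · obtain rfl | rfl : j = 0 ∨ j = 1 := by omega
        · exact absurd hb hb0
        · obtain rfl : i = n - 1 := by omega
          exact Or.inl hlast
      · obtain rfl | rfl : j = n - 1 ∨ j = n - 2 := by omega
        · exact absurd hb hb1
        · exact absurd hb hb2
  · rw [show n + 7 - 1 = n - 1 + 7 by omega, prepend_add, hlast]
  · simp [_root_.prepend, blockInner]
  · rwa [show n + 7 - 1 = n - 1 + 7 by omega, prepend_add]
  · rwa [show n + 7 - 2 = n - 2 + 7 by omega, prepend_add]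

/-- The block `W` has weight `8`. -/
lemma sum_prepend (n : ℕ) (a b : ℕ → ℕ) :
    ∑ i ∈ Finset.range (n + 7), (prepend blockOuter a i + prepend blockInner b i)
      = ∑ i ∈ Finset.range n, (a i + b i) + 8 := by
  rw [add_comm n 7, Finset.sum_range_add, add_comm]
  congr 1
  refine Finset.sum_congr rfl fun i _ => ?_
  rw [add_comm 7 i, prepend_add, prepend_add]

/-- The bound `7 w ≤ 8 n + 6` on the weight `w` says `w ≤ ⌈8n/7⌉`. Besides `W` itself, the words use the blocks `A = 00 02 02 00 20` and `B = 00 02 02 10 00 20`;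
the lengths `5, …, 11` are served by `A`, `B`, `W`, `W` with one, two or three columns appended,
and `AB`. -/
lemma exists_goodWord_base (n : ℕ) (h5 : 5 ≤ n) (h11 : n < 12) :
    ∃ a b : ℕ → ℕ, GoodWord n a b ∧
      7 * ∑ i ∈ Finset.range n, (a i + b i) ≤ 8 * n + 6 := by
  have key : ∀ l m : List ℕ,
      ((∀ i < n, l.getD i 0 ≤ 2 ∧ m.getD i 0 ≤ 2) ∧
      (∀ i < n, l.getD i 0 = 0 →
        m.getD i 0 = 2 ∨ ∃ j < n, CycStep n 1 i j ∧ l.getD j 0 = 2) ∧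
      (∀ i < n, m.getD i 0 = 0 →
        l.getD i 0 = 2 ∨ ∃ j < n, CycStep n 2 i j ∧ m.getD j 0 = 2) ∧
      l.getD (n - 1) 0 = 2 ∧ m.getD 0 0 ≠ 2 ∧ m.getD (n - 1) 0 ≠ 2 ∧ m.getD (n - 2) 0 ≠ 2 ∧
      7 * ∑ i ∈ Finset.range n, (l.getD i 0 + m.getD i 0) ≤ 8 * n + 6) →
      ∃ a b : ℕ → ℕ, GoodWord n a b ∧
        7 * ∑ i ∈ Finset.range n, (a i + b i) ≤ 8 * n + 6 := by
    rintro l m ⟨h1, h2, h3, h4, h5, h6, h7, h8⟩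
    exact ⟨fun i => l.getD i 0, fun i => m.getD i 0, ⟨h1, h2, h3, h4, h5, h6, h7⟩, h8⟩
  interval_cases n
  · exact key [0, 0, 0, 0, 2] [0, 2, 2, 0, 0] (by decide)
  · exact key [0, 0, 0, 1, 0, 2] [0, 2, 2, 0, 0, 0] (by decide)
  · exact key [0, 1, 0, 0, 1, 0, 2] [0, 0, 2, 2, 0, 0, 0] (by decide)
  · exact key [0, 1, 0, 0, 1, 0, 2, 2] [0, 0, 2, 2, 0, 0, 0, 0] (by decide)
  · exact key [0, 1, 0, 0, 1, 0, 2, 0, 2] [0, 0, 2, 2, 0, 0, 0, 1, 0] (by decide)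
  · exact key [0, 1, 0, 0, 1, 0, 2, 0, 0, 2] [0, 0, 2, 2, 0, 0, 0, 1, 1, 0] (by decide)
  · exact key [0, 0, 0, 0, 2, 0, 0, 0, 1, 0, 2] [0, 2, 2, 0, 0, 0, 2, 2, 0, 0, 0] (by decide)

lemma exists_goodWord (n : ℕ) (hn : 5 ≤ n) :
    ∃ a b : ℕ → ℕ, GoodWord n a b ∧
      7 * ∑ i ∈ Finset.range n, (a i + b i) ≤ 8 * n + 6 := by
  induction n using Nat.strong_induction_on with
  | _ n ih =>
    rcases Nat.lt_or_ge n 12 with h | h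
    · exact exists_goodWord_base n hn h
    · obtain ⟨k, rfl⟩ : ∃ k, n = k + 7 := ⟨n - 7, by omega⟩
      obtain ⟨a, b, hg, hw⟩ := ih k (by omega) (by omega)
      refine ⟨_, _, hg.prepend (by omega), ?_⟩
      rw [sum_prepend]
      omega

lemma cast_of_cycStep {n k i j : ℕ} (h : CycStep n k i j) :
    (j : ZMod n) = (i : ZMod n) + (k : ZMod n) ∨ (i : ZMod n) = (j : ZMod n) + (k : ZMod n) := by
  rcases h with h | h | h | h
  · left; exact_mod_cast congrArg (Nat.cast : ℕ → ZMod n) h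
  · right; exact_mod_cast congrArg (Nat.cast : ℕ → ZMod n) h
  · left; simpa using congrArg (Nat.cast : ℕ → ZMod n) h
  · right; simpa using congrArg (Nat.cast : ℕ → ZMod n) h

lemma sum_zmod_val (n : ℕ) [NeZero n] (a : ℕ → ℕ) :
    ∑ x : ZMod n, a x.val = ∑ i ∈ Finset.range n, a i := by
  obtain _ | m := n
  · exact absurd rfl (NeZero.ne 0)
  · exact Fin.sum_univ_eq_sum_range a (m + 1)

lemma romanDomNum_le_of_goodWord {n : ℕ} (hn : 5 ≤ n) {a b : ℕ → ℕ} (h : GoodWord n a b) :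
    romanDomNum (petersen n 2) ≤ ∑ i ∈ Finset.range n, (a i + b i) := by
  have : NeZero n := ⟨by omega⟩
  refine Nat.sInf_le ⟨Sum.elim (fun x => a x.val) (fun x => b x.val), ⟨?_, ?_⟩, ?_⟩
  · rintro (x | x)
    · exact (h.le_two _ x.val_lt).1
    · exact (h.le_two _ x.val_lt).2
  · rintro (x | x) h0
    · obtain hb | ⟨j, hj, hs, ha⟩ := h.outer _ x.val_lt h0
      · exact ⟨Sum.inr x, by simp [petersen], hb⟩
      · have hv : a (j : ZMod n).val = 2 := by rwa [ZMod.val_natCast_of_lt hj]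
        refine ⟨Sum.inl (j : ZMod n), ?_, hv⟩
        rw [petersen, SimpleGraph.fromRel_adj]
        refine ⟨?_, by simpa using cast_of_cycStep hs⟩
        -- the two vertices differ because they carry the values `0` and `2`
        rintro he
        rw [Sum.inl.inj he] at h0
        exact absurd (h0.symm.trans hv) (by decide)
    · obtain ha | ⟨j, hj, hs, hb⟩ := h.inner _ x.val_lt h0
      · exact ⟨Sum.inl x, by simp [petersen], ha⟩
      · have hv : b (j : ZMod n).val = 2 := by rwa [ZMod.val_natCast_of_lt hj]
        refine ⟨Sum.inr (j : ZMod n), ?_, hv⟩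
        rw [petersen, SimpleGraph.fromRel_adj]
        refine ⟨?_, by simpa using cast_of_cycStep hs⟩
        rintro he
        rw [Sum.inr.inj he] at h0
        exact absurd (h0.symm.trans hv) (by decide)
  · rw [weight, finsum_eq_sum_of_fintype, Fintype.sum_sum_type, Finset.sum_add_distrib]
    simp only [Sum.elim_inl, Sum.elim_inr]
    rw [sum_zmod_val, sum_zmod_val]

/-- For every integer `n ≥ 5`, the Roman domination number of the generalized
Petersen graph `P(n,2)` is at most `⌈8n/7⌉`. -/
theorem roman_domination_number_petersen_n_2_upper (n : ℕ) (hn : 5 ≤ n) :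
    (romanDomNum (petersen n 2) : ℤ) ≤ ⌈(8 * (n : ℚ)) / 7⌉ := by
  obtain ⟨a, b, hg, hw⟩ := exists_goodWord n hn
  have hr := romanDomNum_le_of_goodWord hn hg
  -- for integers, `7 w ≤ 8 n + 6` is the same as `w - 1 < 8 n / 7`
  rw [Int.le_ceil_iff, lt_div_iff₀ (by norm_num)]
  have h : 7 * (romanDomNum (petersen n 2) : ℚ) ≤ 8 * n + 6 := by
    exact_mod_cast (Nat.mul_le_mul_left 7 hr).trans hw
  push_cast
  linarith
end

section
/- For every integer n ≥ 5, the Roman domination number of the generalized Petersen graph P(n,2) is at least ⌈8n/7⌉. -/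
/-- The status of a vertex of value `x`, given the values (or statuses) `y`, `z` of its two
neighbours that have already been scanned: `2` if `x = 2`; `1` if `x = 1`, or if `x = 0` and one of
`y`, `z` is `2`; `0` if the vertex still has to be dominated by its third neighbour. -/
def domStatus (x y z : ℕ) : ℕ :=
  if x ≠ 0 then x else if y = 2 ∨ z = 2 then 1 else 0

/-- The potential of the state `(p, q, r)`, the statuses of `v_i`, `u_i` and `u_{i-1}`: the least
total cost of a finite (possibly empty) walk of admissible steps ending in that state, where
reading a column with values `a`, `b` costs `7 (a + b) - 8`. -/
def pot : ℕ → ℕ → ℕ → ℤ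
  | 0, 0, 0 => -26
  | 0, 0, 1 => -19
  | 0, 0, 2 => -15
  | 0, 1, 0 => -19
  | 0, 1, 1 => -16
  | 0, 1, 2 => -15
  | 1, 0, 0 => -19
  | 1, 0, 1 => -18
  | 1, 0, 2 => -8
  | 1, 1, 0 => -12
  | 1, 1, 1 => -11
  | 1, 1, 2 => -8
  | 1, 2, 0 => -13
  | 1, 2, 1 => -7
  | 1, 2, 2 => -7
  | 2, 1, 0 => -13
  | 2, 1, 1 => -10
  | 2, 1, 2 => -1
  | 2, 2, 0 => -6
  | _, _, _ => 0

/-- Reading a column costs at least the increase of the potential. The hypotheses `p = 0 → a = 2`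
and `r = 0 → b = 2` say that the vertices waiting for the new column are dominated by it. -/
lemma pot_step : ∀ p < 3, ∀ q < 3, ∀ r < 3, ∀ a < 3, ∀ b < 3,
    (p = 0 → a = 2) → (r = 0 → b = 2) →
    pot (domStatus a p b) (domStatus b r a) q - pot p q r ≤ 7 * ((a : ℤ) + b) - 8 := by
  intro p hp q hq r hr a ha b hb
  interval_cases p <;> interval_cases q <;> interval_cases r <;> interval_cases a <;>
    interval_cases b <;> decide

lemma domStatus_lt {x : ℕ} (y z : ℕ) (hx : x ≤ 2) : domStatus x y z < 3 := by
  unfold domStatus; split_ifs <;> omega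

lemma domStatus_eq_two {x y z : ℕ} : domStatus x y z = 2 ↔ x = 2 := by
  grind [domStatus]

lemma domStatus_eq_zero {x y z : ℕ} : domStatus x y z = 0 ↔ x = 0 ∧ y ≠ 2 ∧ z ≠ 2 := by
  grind [domStatus]

/-- A status depends on the value of an earlier neighbour only through whether it is `2`, hence
only through the status of that neighbour. -/
lemma domStatus_domStatus (x y z y₁ y₂ : ℕ) :
    domStatus x (domStatus y y₁ y₂) z = domStatus x y z := by
  rw [domStatus]
  simp only [domStatus_eq_two]
  rfl

lemma outer_dominated {n : ℕ} {f : ZMod n ⊕ ZMod n → ℕ} (hf : IsRDF (petersen n 2) f)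
    (i : ZMod n) (h : f (.inl i) = 0) :
    f (.inl (i - 1)) = 2 ∨ f (.inr i) = 2 ∨ f (.inl (i + 1)) = 2 := by
  obtain ⟨u, hu, h2⟩ := hf.2 _ h
  rcases u with j | j <;> simp [petersen] at hu
  · rcases hu.2 with rfl | rfl
    · exact .inr (.inr h2)
    · exact .inl (by simpa using h2)
  · subst hu
    exact .inr (.inl h2)

lemma inner_dominated {n : ℕ} {f : ZMod n ⊕ ZMod n → ℕ} (hf : IsRDF (petersen n 2) f)
    (i : ZMod n) (h : f (.inr i) = 0) :
    f (.inr (i - 2)) = 2 ∨ f (.inl i) = 2 ∨ f (.inr (i + 2)) = 2 := by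
  obtain ⟨u, hu, h2⟩ := hf.2 _ h
  rcases u with j | j <;> simp [petersen] at hu
  · subst hu
    exact .inr (.inl h2)
  · rcases hu.2 with rfl | rfl
    · exact .inr (.inr h2)
    · exact .inl (by simpa using h2)

/-- For every integer `n ≥ 5`, the Roman domination number of the generalized
Petersen graph `P(n,2)` is at least `⌈8n/7⌉`. -/
theorem roman_domination_number_petersen_n_2_lower (n : ℕ) (hn : 5 ≤ n) :
    ⌈(8 * (n : ℚ)) / 7⌉ ≤ (romanDomNum (petersen n 2) : ℤ) := by
  have : NeZero n := ⟨by omega⟩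
  -- the set of weights is nonempty, as the constant function `1` is a Roman domination function,
  -- so its infimum in `ℕ` is attained
  obtain ⟨f, hf, hw⟩ : romanDomNum (petersen n 2) ∈
      {w | ∃ f : ZMod n ⊕ ZMod n → ℕ, IsRDF (petersen n 2) f ∧ weight f = w} :=
    Nat.sInf_mem ⟨_, fun _ => 1, ⟨fun _ => by norm_num, fun _ h => absurd h one_ne_zero⟩, rfl⟩
  have h := eight_mul_le_weight hf
  rw [← hw, Int.ceil_le, div_le_iff₀ (by norm_num)]
  have h' : (8 * n : ℚ) ≤ 7 * weight f := by exact_mod_cast h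
  push_cast
  linarith
end

section
/- For every integer n ≥ 7 with n ≠ 11, the domination number of the generalized Petersen graph P(n,3) equals n − 2⌊n/4⌋. -/
namespace PetersenThree

/-! ### The window automaton -/

/-- One transition of the window automaton. A natural number `s` encodes the membership bits
`y 0, …, y 5` (bits `0`–`5`) of six consecutive inner vertices, the bits `x 3, x 4, x 5`
(bits `6`–`8`) of the last three outer ones, and the remaining over-domination budget `s / 512`.
The list contains the codes of all windows shifted by one, such that inner vertex `3` and outer
vertex `5` are dominated and the excess of their two domination counts is paid from the budget. -/
def next (s : ℕ) : List ℕ :=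
  [(0, 0), (0, 1), (1, 0), (1, 1)].filterMap fun b : ℕ × ℕ =>
    let p := s % 2 + s / 8 % 2 + b.1 + s / 64 % 2
    let q := s / 128 % 2 + s / 256 % 2 + b.2 + s / 32 % 2
    bif Nat.ble 1 p && (Nat.ble 1 q && Nat.ble (p + q) (s / 512 + 2)) then
      some (s % 64 / 2 + 32 * b.1 + 64 * (s / 64 % 8 / 2 + 4 * b.2) + 512 * (s / 512 + 2 - (p + q)))
    else none

/-- Adds `a` to a list without creating duplicates. -/
def ins (a : ℕ) (l : List ℕ) : List ℕ := bif l.any (Nat.beq a) then l else a :: l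

/-- All successors of the codes in a list, without duplicates. -/
def step (l : List ℕ) : List ℕ := l.foldr (fun s acc => (next s).foldr ins acc) []

/-- Codes reachable in `t` transitions from the window `s₀` with initial budget `2`. -/
def reach (s₀ : ℕ) : ℕ → List ℕ
  | 0 => [s₀ + 1024]
  | t + 1 => step (reach s₀ t)

/-- The lengths `t` for which a closed walk of excess at most `2` has to be excluded. -/
def relevant (t : ℕ) : Bool := Nat.ble 7 t && (Nat.ble 2 (t % 4) && !(Nat.beq t 11))

/-- For the starting window `s₀`: no closed walk of relevant length below `28`, and the set of
reachable codes repeats with period `4` from time `24` on. -/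
def check (s₀ : ℕ) : Bool :=
  ((List.range 28).all fun t => !(relevant t) || (reach s₀ t).all fun s => !(Nat.beq (s % 512) s₀))
  && (reach s₀ 28).all fun s => (reach s₀ 24).any (Nat.beq s)

theorem check_all : (List.range 512).all check = true := by decide +kernel

theorem mem_ins {a b : ℕ} {l : List ℕ} : b ∈ ins a l ↔ b = a ∨ b ∈ l := by
  unfold ins
  cases h : l.any (Nat.beq a)
  · simp
  · simp only [List.any_eq_true, Nat.beq_eq] at h
    obtain ⟨c, hc, rfl⟩ := h
    simp only [cond_true]
    constructor
    · exact Or.inr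
    · rintro (rfl | h)
      · exact hc
      · exact h

theorem mem_foldr_ins {b : ℕ} {l acc : List ℕ} : b ∈ l.foldr ins acc ↔ b ∈ l ∨ b ∈ acc := by
  induction l with
  | nil => simp
  | cons a l ih => simp [mem_ins, ih, or_assoc]

theorem mem_step {b : ℕ} {l : List ℕ} : b ∈ step l ↔ ∃ s ∈ l, b ∈ next s := by
  unfold step
  induction l with
  | nil => simp
  | cons a l ih => simp [mem_foldr_ins, ih]

theorem mem_next {s ny nx s' : ℕ} (hny : ny ≤ 1) (hnx : nx ≤ 1)
    (hp : 1 ≤ s % 2 + s / 8 % 2 + ny + s / 64 % 2)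
    (hq : 1 ≤ s / 128 % 2 + s / 256 % 2 + nx + s / 32 % 2)
    (hb : s % 2 + s / 8 % 2 + ny + s / 64 % 2 + (s / 128 % 2 + s / 256 % 2 + nx + s / 32 % 2)
      ≤ s / 512 + 2)
    (hs' : s' = s % 64 / 2 + 32 * ny + 64 * (s / 64 % 8 / 2 + 4 * nx) + 512 * (s / 512 + 2 -
      (s % 2 + s / 8 % 2 + ny + s / 64 % 2 + (s / 128 % 2 + s / 256 % 2 + nx + s / 32 % 2)))) :
    s' ∈ next s := by
  unfold next
  rw [List.mem_filterMap]
  refine ⟨(ny, nx), ?_, ?_⟩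
  · interval_cases ny <;> interval_cases nx <;> simp
  · have h1 := Nat.ble_eq_true_of_le hp
    have h2 := Nat.ble_eq_true_of_le hq
    have h3 := Nat.ble_eq_true_of_le hb
    simp only [h1, h2, h3, Bool.and_self, cond_true, hs']

/-! ### Closed walks of small excess -/

/-- The nine membership bits in the window of the sequences `x`, `y` starting at `t`. -/
def window (x y : ℕ → ℕ) (t : ℕ) : ℕ :=
  y t + 2 * y (t + 1) + 4 * y (t + 2) + 8 * y (t + 3) + 16 * y (t + 4) + 32 * y (t + 5)
    + 64 * (x (t + 3) + 2 * x (t + 4) + 4 * x (t + 5))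

/-- How often the inner vertex `t + 3` is dominated, given the membership bits `x` of the outer
and `y` of the inner vertices. -/
def innerCount (x y : ℕ → ℕ) (t : ℕ) : ℕ := y t + y (t + 3) + y (t + 6) + x (t + 3)

/-- How often the outer vertex `t + 5` is dominated. -/
def outerCount (x y : ℕ → ℕ) (t : ℕ) : ℕ := x (t + 4) + x (t + 5) + x (t + 6) + y (t + 5)

theorem digit {s r k b q : ℕ} (h : s = r + k * (b + 2 * q)) (hr : r < k) (hb : b ≤ 1) :
    s / k % 2 = b := by
  rw [h, Nat.add_mul_div_left _ _ (by omega), Nat.div_eq_of_lt hr]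
  omega

theorem window_next {x y : ℕ → ℕ} (hx : ∀ i, x i ≤ 1) (hy : ∀ i, y i ≤ 1) {t c c' : ℕ}
    (hp : 1 ≤ innerCount x y t) (hq : 1 ≤ outerCount x y t)
    (hc : c' + (innerCount x y t + outerCount x y t) = c + 2) :
    window x y (t + 1) + 512 * c' ∈ next (window x y t + 512 * c) := by
  have e0 := hy t
  have e1 := hy (t + 1)
  have e2 := hy (t + 2)
  have e3 := hy (t + 3)
  have e4 := hy (t + 4)
  have e5 := hy (t + 5)
  have f3 := hx (t + 3)
  have f4 := hx (t + 4)
  have f5 := hx (t + 5)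
  unfold innerCount at hp hc
  unfold outerCount at hq hc
  obtain ⟨s, hs⟩ : ∃ s, s = window x y t + 512 * c := ⟨_, rfl⟩
  have hs0 := hs
  unfold window at hs
  have d0 : s % 2 = y t := by clear * - hs e0; omega
  have d3 : s / 8 % 2 = y (t + 3) :=
    digit (r := y t + 2 * y (t + 1) + 4 * y (t + 2))
      (q := y (t + 4) + 2 * y (t + 5) + 4 * (x (t + 3) + 2 * x (t + 4) + 4 * x (t + 5)) + 32 * c)
      (by rw [hs]; ring) (by clear * - e0 e1 e2; omega) e3
  have d5 : s / 32 % 2 = y (t + 5) :=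
    digit (r := y t + 2 * y (t + 1) + 4 * y (t + 2) + 8 * y (t + 3) + 16 * y (t + 4))
      (q := x (t + 3) + 2 * x (t + 4) + 4 * x (t + 5) + 8 * c)
      (by rw [hs]; ring) (by clear * - e0 e1 e2 e3 e4; omega) e5
  have hY : y t + 2 * y (t + 1) + 4 * y (t + 2) + 8 * y (t + 3) + 16 * y (t + 4)
      + 32 * y (t + 5) < 64 := by clear * - e0 e1 e2 e3 e4 e5; omega
  have b3 : s / 64 % 2 = x (t + 3) :=
    digit (q := x (t + 4) + 2 * x (t + 5) + 4 * c) (by rw [hs]; ring) hY f3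
  have b4 : s / 128 % 2 = x (t + 4) :=
    digit (r := y t + 2 * y (t + 1) + 4 * y (t + 2) + 8 * y (t + 3) + 16 * y (t + 4)
        + 32 * y (t + 5) + 64 * x (t + 3)) (q := x (t + 5) + 2 * c) (by rw [hs]; ring)
      (by clear * - hY f3; omega) f4
  have b5 : s / 256 % 2 = x (t + 5) :=
    digit (r := y t + 2 * y (t + 1) + 4 * y (t + 2) + 8 * y (t + 3) + 16 * y (t + 4)
        + 32 * y (t + 5) + 64 * x (t + 3) + 128 * x (t + 4)) (q := c) (by rw [hs]; ring)
      (by clear * - hY f3 f4; omega) f5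
  have hX : x (t + 3) + 2 * x (t + 4) + 4 * x (t + 5) < 8 := by clear * - f3 f4 f5; omega
  have hc0 : s / 512 = c := by clear * - hs hY hX; omega
  have g1 : s % 64 / 2 = y (t + 1) + 2 * y (t + 2) + 4 * y (t + 3) + 8 * y (t + 4)
      + 16 * y (t + 5) := by
    have : s % 64 = y t + 2 * y (t + 1) + 4 * y (t + 2) + 8 * y (t + 3) + 16 * y (t + 4)
      + 32 * y (t + 5) := by clear * - hs hY; omega
    rw [this]
    clear * - e0
    omega
  have g2 : s / 64 % 8 / 2 = x (t + 4) + 2 * x (t + 5) := by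
    have : s / 64 % 8 = x (t + 3) + 2 * x (t + 4) + 4 * x (t + 5) := by
      clear * - hs hY hX; omega
    rw [this]
    clear * - f3
    omega
  clear hs
  rw [← hs0]
  refine mem_next (hy (t + 6)) (hx (t + 6)) ?_ ?_ ?_ ?_
  · rw [d0, d3, b3]; exact hp
  · rw [b4, b5, d5]; exact hq
  · rw [d0, d3, b3, b4, b5, d5, hc0]; clear * - hc; omega
  · rw [d0, d3, d5, b3, b4, b5, hc0, g1, g2]
    have hc1 : c + 2 - (y t + y (t + 3) + y (t + 6) + x (t + 3) +
        (x (t + 4) + x (t + 5) + x (t + 6) + y (t + 5))) = c' := by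
      clear * - hc; omega
    rw [hc1]
    unfold window
    ring_nf

/-- Every `n`-periodic dominating pair of sequences whose length `n` is relevant has total
domination count more than `2 n + 2` over one period. -/
theorem excess_bound {x y : ℕ → ℕ} (hx : ∀ i, x i ≤ 1) (hy : ∀ i, y i ≤ 1) {n : ℕ}
    (hxp : ∀ i, x (n + i) = x i) (hyp : ∀ i, y (n + i) = y i)
    (hp : ∀ t, 1 ≤ innerCount x y t) (hq : ∀ t, 1 ≤ outerCount x y t)
    (hn : 7 ≤ n) (hmod : 2 ≤ n % 4) (h11 : n ≠ 11) :
    2 * n + 2 < ∑ t ∈ Finset.range n, (innerCount x y t + outerCount x y t) := by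
  by_contra! hle
  -- `F t` is the total domination count paid before time `t`.
  set F : ℕ → ℕ := fun t => ∑ i ∈ Finset.range t, (innerCount x y i + outerCount x y i)
  have hF1 : ∀ t, F (t + 1) = F t + (innerCount x y t + outerCount x y t) := fun t =>
    Finset.sum_range_succ _ t
  have hF0 : F 0 = 0 := Finset.sum_range_zero _
  have hFlow : ∀ t, 2 * t ≤ F t := by
    intro t
    induction t with
    | zero => simp
    | succ t ih => have := hF1 t; have := hp t; have := hq t; omega
  have hFup : ∀ k t, t + k = n → F t ≤ 2 * t + 2 := by
    intro k
    induction k with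
    | zero => rintro t rfl; exact hle
    | succ k ih =>
      intro t ht
      have := ih (t + 1) (by omega)
      have := hF1 t; have := hp t; have := hq t; omega
  clear_value F
  set s₀ := window x y 0 with hs₀
  have hs₀lt : s₀ < 512 := by
    have e0 := hy 0
    have e1 := hy (0 + 1)
    have e2 := hy (0 + 2)
    have e3 := hy (0 + 3)
    have e4 := hy (0 + 4)
    have e5 := hy (0 + 5)
    have f3 := hx (0 + 3)
    have f4 := hx (0 + 4)
    have f5 := hx (0 + 5)
    unfold window at hs₀
    omega
  have hck := List.all_eq_true.1 check_all s₀ (List.mem_range.2 hs₀lt)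
  unfold check at hck
  rw [Bool.and_eq_true] at hck
  obtain ⟨hck1, hck2⟩ := hck
  -- At time `t` the code lies in the reachable set at time `t`, folded back to `24, …, 27`.
  have hreach : ∀ t ≤ n, window x y t + 512 * (2 * t + 2 - F t) ∈
      reach s₀ (if t < 24 then t else 24 + t % 4) := by
    intro t
    induction t with
    | zero => intro _; simp [reach, hF0, hs₀]
    | succ t ih =>
      intro ht
      have h1 := ih (by omega)
      have hstep : window x y (t + 1) + 512 * (2 * (t + 1) + 2 - F (t + 1)) ∈
          reach s₀ ((if t < 24 then t else 24 + t % 4) + 1) := by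
        refine mem_step.2 ⟨_, h1, window_next hx hy (hp t) (hq t) ?_⟩
        have := hF1 t
        have := hp t
        have := hq t
        have := hFup (n - (t + 1)) (t + 1) (by omega)
        omega
      by_cases h24 : t < 24
      · have : (if t + 1 < 24 then t + 1 else 24 + (t + 1) % 4) =
            (if t < 24 then t else 24 + t % 4) + 1 := by split_ifs <;> omega
        rwa [this]
      · by_cases h3 : t % 4 = 3
        · have e : (if t < 24 then t else 24 + t % 4) + 1 = 28 := by split_ifs; omega
          rw [e] at hstep
          have e' : (if t + 1 < 24 then t + 1 else 24 + (t + 1) % 4) = 24 := by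
            split_ifs <;> omega
          rw [e']
          have h := List.all_eq_true.1 hck2 _ hstep
          simp only [List.any_eq_true, Nat.beq_eq] at h
          obtain ⟨c, hc, hc'⟩ := h
          rwa [hc']
        · have : (if t + 1 < 24 then t + 1 else 24 + (t + 1) % 4) =
              (if t < 24 then t else 24 + t % 4) + 1 := by split_ifs <;> omega
          rwa [this]
  have hend := hreach n le_rfl
  have hclosed : window x y n = s₀ := by
    have hy0 := hyp 0
    rw [add_zero] at hy0
    simp only [hs₀, window, hxp, hyp, hy0, zero_add]
  rw [hclosed] at hend
  set T := (if n < 24 then n else 24 + n % 4) with hT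
  have hT28 : T < 28 := by rw [hT]; split_ifs <;> omega
  have hrel : relevant T = true := by
    have a1 : 7 ≤ T := by rw [hT]; split_ifs <;> omega
    have a2 : 2 ≤ T % 4 := by rw [hT]; split_ifs <;> omega
    have a3 : T ≠ 11 := by rw [hT]; split_ifs <;> omega
    have a3' : Nat.beq T 11 = false := by
      rw [Bool.eq_false_iff, ne_eq, Nat.beq_eq]; exact a3
    simp [relevant, Nat.ble_eq_true_of_le a1, Nat.ble_eq_true_of_le a2, a3']
  have h := List.all_eq_true.1 hck1 T (List.mem_range.2 hT28)
  rw [hrel, Bool.not_true, Bool.false_or] at h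
  have h' := List.all_eq_true.1 h _ hend
  have hmod512 : (s₀ + 512 * (2 * n + 2 - F n)) % 512 = s₀ := by omega
  rw [hmod512] at h'
  simp at h'

/-! ### Lower bound -/

theorem adj_inl_inl {n k : ℕ} {i j : ZMod n} (h : (petersen n k).Adj (Sum.inl i) (Sum.inl j)) :
    j = i + 1 ∨ i = j + 1 := by
  simpa [petersen] using h.2

theorem adj_inl_inr {n k : ℕ} {i j : ZMod n} (h : (petersen n k).Adj (Sum.inl i) (Sum.inr j)) :
    j = i := by
  simpa [petersen] using h

theorem adj_inr_inr {n k : ℕ} {i j : ZMod n} (h : (petersen n k).Adj (Sum.inr i) (Sum.inr j)) :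
    j = i + k ∨ i = j + k := by
  simpa [petersen] using h.2

theorem sum_range_cast (n : ℕ) [NeZero n] (g : ZMod n → ℕ) :
    ∑ t ∈ Finset.range n, g (t : ZMod n) = ∑ z, g z := by
  refine Finset.sum_bij' (fun t _ => (t : ZMod n)) (fun z _ => z.val) ?_ ?_ ?_ ?_ ?_
  · simp
  · intro z _; simpa using ZMod.val_lt z
  · intro t ht; exact ZMod.val_cast_of_lt (by simpa using ht)
  · intro z _; exact ZMod.natCast_zmod_val z
  · simp

theorem sum_range_shift (n : ℕ) [NeZero n] (g : ZMod n → ℕ) (k : ℕ) :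
    ∑ t ∈ Finset.range n, g ((t + k : ℕ) : ZMod n) = ∑ z, g z := by
  have h := sum_range_cast n (fun z => g (z + k))
  rw [← Equiv.sum_comp (Equiv.addRight (k : ZMod n)) g]
  simpa using h

theorem lower_bound {n : ℕ} (hn : 7 ≤ n) (h11 : n ≠ 11) {S : Set (ZMod n ⊕ ZMod n)}
    (hS : IsDomSet (petersen n 3) S) : 2 * (n / 4) + n % 4 ≤ S.ncard := by
  classical
  have : NeZero n := ⟨by omega⟩
  set X : ZMod n → ℕ := fun z => if Sum.inl z ∈ S then 1 else 0 with hX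
  set Y : ZMod n → ℕ := fun z => if Sum.inr z ∈ S then 1 else 0 with hY
  have hcard : S.ncard = ∑ z, X z + ∑ z, Y z := by
    rw [Set.ncard_eq_toFinset_card']
    have : S.toFinset = Finset.univ.filter (· ∈ S) := by ext; simp
    rw [this, Finset.card_filter, Fintype.sum_sum_type]
  set x : ℕ → ℕ := fun i => X (i : ZMod n) with hx
  set y : ℕ → ℕ := fun i => Y (i : ZMod n) with hy
  have hx1 : ∀ i, x i ≤ 1 := fun i => by simp only [hx, hX]; split_ifs <;> omega
  have hy1 : ∀ i, y i ≤ 1 := fun i => by simp only [hy, hY]; split_ifs <;> omega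
  have hxm : ∀ (i : ℕ) (z : ZMod n), Sum.inl z ∈ S → z = (i : ZMod n) → x i = 1 := by
    rintro i z hz rfl; simp [hx, hX, hz]
  have hym : ∀ (i : ℕ) (z : ZMod n), Sum.inr z ∈ S → z = (i : ZMod n) → y i = 1 := by
    rintro i z hz rfl; simp [hy, hY, hz]
  have hxp : ∀ i, x (n + i) = x i := fun i => by simp [hx]
  have hyp : ∀ i, y (n + i) = y i := fun i => by simp [hy]
  have hp : ∀ t, 1 ≤ innerCount x y t := by
    intro t
    unfold innerCount
    rcases hS (Sum.inr ((t + 3 : ℕ) : ZMod n)) with h | ⟨u | u, hu, ha⟩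
    · have := hym (t + 3) _ h rfl; omega
    · have := hxm (t + 3) _ hu (adj_inl_inr ha).symm; omega
    · rcases adj_inr_inr ha with h | h
      · have := hym t _ hu (by push_cast at h; exact (add_right_cancel h).symm); omega
      · have := hym (t + 6) _ hu (by rw [h]; push_cast; ring); omega
  have hq : ∀ t, 1 ≤ outerCount x y t := by
    intro t
    unfold outerCount
    rcases hS (Sum.inl ((t + 5 : ℕ) : ZMod n)) with h | ⟨u | u, hu, ha⟩
    · have := hxm (t + 5) _ h rfl; omega
    · rcases adj_inl_inl ha with h | h
      · have := hxm (t + 4) _ hu (by push_cast at h ⊢; linear_combination -h); omega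
      · have := hxm (t + 6) _ hu (by rw [h]; push_cast; ring); omega
    · have := hym (t + 5) _ hu (adj_inl_inr ha.symm); omega
  have hsum : ∑ t ∈ Finset.range n, (innerCount x y t + outerCount x y t) = 4 * S.ncard := by
    have hXs : ∀ k, ∑ t ∈ Finset.range n, x (t + k) = ∑ z, X z := sum_range_shift n X
    have hYs : ∀ k, ∑ t ∈ Finset.range n, y (t + k) = ∑ z, Y z := sum_range_shift n Y
    have hY0 := hYs 0
    simp only [add_zero] at hY0
    simp only [innerCount, outerCount, Finset.sum_add_distrib, hXs, hYs, hY0, hcard]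
    ring
  have hlow : 2 * n ≤ 4 * S.ncard := by
    rw [← hsum]
    calc 2 * n = ∑ _t ∈ Finset.range n, 2 := by simp [mul_comm]
      _ ≤ _ := Finset.sum_le_sum fun t _ => by have := hp t; have := hq t; omega
  by_cases hmod : 2 ≤ n % 4
  · have := excess_bound hx1 hy1 hxp hyp hp hq hn hmod h11
    omega
  · omega

/-! ### Upper bound -/

theorem adj_outer {n : ℕ} (hn : 7 ≤ n) (i : ZMod n) :
    (petersen n 3).Adj (Sum.inl i) (Sum.inl (i + 1)) := by
  have : Fact (1 < n) := ⟨by omega⟩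
  refine ⟨?_, Or.inl rfl⟩
  simp

theorem adj_spoke {n : ℕ} (i : ZMod n) :
    (petersen n 3).Adj (Sum.inl i) (Sum.inr i) :=
  ⟨by simp, Or.inl rfl⟩

theorem adj_inner {n : ℕ} (hn : 7 ≤ n) (i : ZMod n) :
    (petersen n 3).Adj (Sum.inr i) (Sum.inr (i + 3)) := by
  refine ⟨?_, Or.inl (by simp)⟩
  have h3 : ((3 : ℕ) : ZMod n) ≠ 0 := by
    rw [ne_eq, ZMod.natCast_eq_zero_iff]
    exact fun h => absurd (Nat.le_of_dvd (by norm_num) h) (by omega)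
  simpa using h3

/-- Outer vertices `v_{4j}`, inner vertices `u_{4j+2}` for `j < m`, and the `r` consecutive
inner vertices starting at `u_{4m-1}`; this dominates `P(4m+r, 3)` for `r < 4`. -/
def domSet (n m r : ℕ) : Set (ZMod n ⊕ ZMod n) :=
  (fun j : ℕ => Sum.inl ((4 * j : ℕ) : ZMod n)) '' Set.Iio m ∪
    (fun j : ℕ => Sum.inr ((4 * j + 2 : ℕ) : ZMod n)) '' Set.Iio m ∪
    (fun i : ℕ => Sum.inr ((4 * m - 1 + i : ℕ) : ZMod n)) '' Set.Iio r

theorem domSet_ncard (n m r : ℕ) : (domSet n m r).ncard ≤ 2 * m + r := by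
  unfold domSet
  have hI : ∀ k : ℕ, (Set.Iio k).ncard = k := fun k => by
    rw [Set.ncard_eq_toFinset_card']; simp
  have h1 := Set.ncard_image_le (f := fun j : ℕ => (Sum.inl ((4 * j : ℕ) : ZMod n) :
    ZMod n ⊕ ZMod n)) (Set.finite_Iio m)
  have h2 := Set.ncard_image_le (f := fun j : ℕ => (Sum.inr ((4 * j + 2 : ℕ) : ZMod n) :
    ZMod n ⊕ ZMod n)) (Set.finite_Iio m)
  have h3 := Set.ncard_image_le (f := fun i : ℕ => (Sum.inr ((4 * m - 1 + i : ℕ) : ZMod n) :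
    ZMod n ⊕ ZMod n)) (Set.finite_Iio r)
  rw [hI] at h1 h2 h3
  refine (Set.ncard_union_le _ _).trans ?_
  have := Set.ncard_union_le ((fun j : ℕ => (Sum.inl ((4 * j : ℕ) : ZMod n) :
    ZMod n ⊕ ZMod n)) '' Set.Iio m) ((fun j : ℕ => Sum.inr ((4 * j + 2 : ℕ) : ZMod n)) '' Set.Iio m)
  omega

theorem domSet_isDomSet {n m r : ℕ} (hn : 7 ≤ n) (hr : r < 4) (hnm : n = 4 * m + r) :
    IsDomSet (petersen n 3) (domSet n m r) := by
  have : NeZero n := ⟨by omega⟩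
  have hA : ∀ a, a % 4 = 0 → a < 4 * m → Sum.inl (a : ZMod n) ∈ domSet n m r := fun a h1 h2 =>
    Or.inl (Or.inl ⟨a / 4, by simp only [Set.mem_Iio]; omega, by
      show Sum.inl _ = Sum.inl _
      congr 2; omega⟩)
  have hB : ∀ a, (a % 4 = 2 ∧ a < 4 * m) ∨ (4 * m ≤ a + 1 ∧ a + 1 < 4 * m + r) →
      Sum.inr (a : ZMod n) ∈ domSet n m r := by
    rintro a (⟨h1, h2⟩ | ⟨h1, h2⟩)
    · exact Or.inl (Or.inr ⟨a / 4, by simp only [Set.mem_Iio]; omega, by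
        show Sum.inr _ = Sum.inr _
        congr 2; omega⟩)
    · exact Or.inr ⟨a + 1 - 4 * m, by simp only [Set.mem_Iio]; omega, by
        show Sum.inr _ = Sum.inr _
        congr 2; omega⟩
  have hcast : ∀ a b : ℕ, (a = b ∨ a = b + n ∨ a + n = b) → (a : ZMod n) = (b : ZMod n) := by
    rintro a b (rfl | rfl | rfl) <;> simp
  rintro (z | z)
  · obtain ⟨a, ha, rfl⟩ : ∃ a < n, (a : ZMod n) = z := ⟨z.val, ZMod.val_lt z, by simp⟩
    have hprev : ∀ b : ℕ, Sum.inl (b : ZMod n) ∈ domSet n m r → b + 1 = a →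
        ∃ u ∈ domSet n m r, (petersen n 3).Adj u (Sum.inl (a : ZMod n)) := by
      rintro b hb rfl
      exact ⟨_, hb, by push_cast; exact adj_outer hn _⟩
    have hnext : ∀ b : ℕ, Sum.inl (b : ZMod n) ∈ domSet n m r → (a + 1 = b ∨ a + 1 = b + n) →
        ∃ u ∈ domSet n m r, (petersen n 3).Adj u (Sum.inl (a : ZMod n)) := by
      intro b hb h
      refine ⟨_, hb, ?_⟩
      rw [← hcast (a + 1) b (by omega)]
      push_cast
      exact (adj_outer hn _).symm
    have hsp : Sum.inr (a : ZMod n) ∈ domSet n m r →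
        ∃ u ∈ domSet n m r, (petersen n 3).Adj u (Sum.inl (a : ZMod n)) :=
      fun h => ⟨_, h, (adj_spoke _).symm⟩
    by_cases h1 : (a % 4 = 2 ∧ a < 4 * m) ∨ (4 * m ≤ a + 1 ∧ a + 1 < 4 * m + r)
    · exact Or.inr (hsp (hB a h1))
    by_cases h2 : a + 1 = n
    · exact Or.inr (hnext 0 (hA 0 rfl (by omega)) (by omega))
    have hlt : a < 4 * m := by omega
    obtain h | h | h : a % 4 = 0 ∨ a % 4 = 1 ∨ a % 4 = 3 := by omega
    · exact Or.inl (hA a h hlt)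
    · exact Or.inr (hprev (a - 1) (hA _ (by omega) (by omega)) (by omega))
    · exact Or.inr (hnext (a + 1) (hA _ (by omega) (by omega)) (by omega))
  · obtain ⟨a, ha, rfl⟩ : ∃ a < n, (a : ZMod n) = z := ⟨z.val, ZMod.val_lt z, by simp⟩
    have hprev : ∀ b : ℕ, Sum.inr (b : ZMod n) ∈ domSet n m r → (b + 3 = a ∨ b + 3 = a + n) →
        ∃ u ∈ domSet n m r, (petersen n 3).Adj u (Sum.inr (a : ZMod n)) := by
      intro b hb h
      refine ⟨_, hb, ?_⟩
      rw [← hcast (b + 3) a (by omega)]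
      push_cast
      exact adj_inner hn _
    have hnext : ∀ b : ℕ, Sum.inr (b : ZMod n) ∈ domSet n m r → (a + 3 = b ∨ a + 3 = b + n) →
        ∃ u ∈ domSet n m r, (petersen n 3).Adj u (Sum.inr (a : ZMod n)) := by
      intro b hb h
      refine ⟨_, hb, ?_⟩
      rw [← hcast (a + 3) b (by omega)]
      push_cast
      exact (adj_inner hn _).symm
    by_cases h1 : (a % 4 = 2 ∧ a < 4 * m) ∨ (4 * m ≤ a + 1 ∧ a + 1 < 4 * m + r)
    · exact Or.inl (hB a h1)
    by_cases h0 : a % 4 = 0 ∧ a < 4 * m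
    · exact Or.inr ⟨_, hA a h0.1 h0.2, adj_spoke _⟩
    right
    by_cases ha1 : a = 1
    · exact hprev (n - 2) (hB _ (by omega)) (by omega)
    by_cases ha3 : a + 3 = n + 2
    · exact hnext 2 (hB _ (by omega)) (by omega)
    by_cases hc : a % 4 = 3 ∧ a < 4 * m
    · exact hnext (a + 3) (hB _ (by omega)) (by omega)
    · exact hprev (a - 3) (hB _ (by omega)) (by omega)

end PetersenThree

open PetersenThree in
/-- For every integer `n ≥ 7` with `n ≠ 11`, the domination number of the
generalized Petersen graph `P(n,3)` equals `n − 2⌊n/4⌋`. -/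
theorem domination_number_petersen_n_3 (n : ℕ) (hn : 7 ≤ n) (h11 : n ≠ 11) :
    (domNum (petersen n 3) : ℤ) = n - 2 * ⌊(n : ℚ) / 4⌋ := by
  have hfl : ⌊(n : ℚ) / 4⌋ = ((n / 4 : ℕ) : ℤ) := by
    have := Rat.floor_natCast_div_natCast n 4
    exact_mod_cast this
  have hdom : IsDomSet (petersen n 3) (domSet n (n / 4) (n % 4)) :=
    domSet_isDomSet hn (Nat.mod_lt _ (by norm_num)) (by omega)
  have hup : domNum (petersen n 3) ≤ 2 * (n / 4) + n % 4 :=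
    le_trans (Nat.sInf_le (m := (domSet n (n / 4) (n % 4)).ncard) ⟨_, hdom, rfl⟩)
      (domSet_ncard n _ _)
  have hlow : 2 * (n / 4) + n % 4 ≤ domNum (petersen n 3) := by
    refine le_csInf ⟨_, _, hdom, rfl⟩ ?_
    rintro k ⟨S, hS, rfl⟩
    exact lower_bound hn h11 hS
  rw [hfl]
  omega
end

section
/- Let n ≥ 5 and let f be a γ_R-function of the generalized Petersen graph P(n,2) with minimum cardinality of V₂, i.e. |V₂| ≤ |V₂′| for every γ_R-function f′ = (V₀′; V₁′; V₂′) of P(n,2). Then for every vertex w₁ ∈ V₂ and every neighbor w₂ of w₁, we have w₂ ∉ V₂. -/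
/-- The function obtained from `f` by lowering `w` to `0` and raising `a` and `b` to at least `1`.
The vertices `w`, `a`, `b` need not be distinct; the value `0` at `w` takes precedence. -/
noncomputable def shift {V : Type*} (f : V → ℕ) (w a b : V) : V → ℕ := by
  classical
  exact fun v => if v = w then 0 else if v = a ∨ v = b then max 1 (f v) else f v

theorem shift_self {V : Type*} (f : V → ℕ) (w a b : V) : shift f w a b w = 0 := by
  simp [shift]

theorem shift_eq_two_iff {V : Type*} (f : V → ℕ) (w a b v : V) :
    shift f w a b v = 2 ↔ v ≠ w ∧ f v = 2 := by
  unfold shift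
  split_ifs <;> simp_all <;> omega

theorem isRDF_shift {V : Type*} {G : SimpleGraph V} {f : V → ℕ} (hf : IsRDF G f)
    {w₁ w₂ a b : V} (hadj : G.Adj w₁ w₂) (hw₂ : f w₂ = 2)
    (hN : ∀ v, G.Adj w₁ v → v = w₂ ∨ v = a ∨ v = b) :
    IsRDF G (shift f w₁ a b) := by
  refine ⟨fun v => ?_, fun v hv => ?_⟩
  · have := hf.1 v
    unfold shift
    split_ifs <;> simp <;> omega
  · by_cases hvw : v = w₁
    · subst hvw
      exact ⟨w₂, hadj, (shift_eq_two_iff ..).2 ⟨hadj.ne', hw₂⟩⟩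
    · obtain ⟨hab, hv0⟩ : ¬ (v = a ∨ v = b) ∧ f v = 0 := by
        unfold shift at hv
        split_ifs at hv with h
        · omega
        · exact ⟨h, hv⟩
      obtain ⟨u, hu, hu2⟩ := hf.2 v hv0
      refine ⟨u, hu, (shift_eq_two_iff ..).2 ⟨?_, hu2⟩⟩
      rintro rfl
      rcases hN v hu.symm with rfl | h
      · omega
      · exact hab h

theorem weight_shift_le {V : Type*} [Finite V] {f : V → ℕ} {w : V} (hw : f w = 2) (a b : V) :
    weight (shift f w a b) ≤ weight f := by
  classical
  have := Fintype.ofFinite V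
  unfold weight
  rw [finsum_eq_sum_of_fintype, finsum_eq_sum_of_fintype]
  have key : ∑ v, (shift f w a b v + if v = w then 2 else 0) ≤
      ∑ v, (f v + ((if v = a then 1 else 0) + if v = b then 1 else 0)) := by
    refine Finset.sum_le_sum fun v _ => ?_
    by_cases hvw : v = w
    · subst hvw
      simp [shift_self, hw]
    · unfold shift
      simp only [hvw, if_false]
      split_ifs <;> simp_all <;> omega
  simp only [Finset.sum_add_distrib, Finset.sum_ite_eq', Finset.mem_univ, if_true] at key
  omega

/-- Every vertex of `P(n,k)` has at most three neighbours. -/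
theorem petersen_neighbors (n k : ℕ) (w : ZMod n ⊕ ZMod n) :
    ∃ x y z, ∀ v, (petersen n k).Adj w v → v = x ∨ v = y ∨ v = z := by
  rcases w with i | i
  · refine ⟨Sum.inl (i + 1), Sum.inl (i - 1), Sum.inr i, ?_⟩
    rintro (j | j) h <;> simp [petersen] at h ⊢ <;> grind
  · refine ⟨Sum.inr (i + k), Sum.inr (i - k), Sum.inl i, ?_⟩
    rintro (j | j) h <;> simp [petersen] at h ⊢ <;> grind

/-- If `f` is a `γ_R`-function of `P(n,2)` (`n ≥ 5`) with minimum cardinality of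
`V₂`, `w₁ ∈ V₂` and `w₂` is a neighbor of `w₁`, then `w₂ ∉ V₂`. -/
theorem neighbor_of_V2_not_in_V2 (n : ℕ) (hn : 5 ≤ n)
    (f : ZMod n ⊕ ZMod n → ℕ) (hf : IsGammaRFun (petersen n 2) f)
    (hmin : MinV2 n f)
    (w₁ w₂ : ZMod n ⊕ ZMod n) (hw₁ : f w₁ = 2)
    (hadj : (petersen n 2).Adj w₁ w₂) :
    f w₂ ≠ 2 := by
  intro hw₂
  have : NeZero n := ⟨by omega⟩
  obtain ⟨a, b, hN⟩ : ∃ a b, ∀ v, (petersen n 2).Adj w₁ v → v = w₂ ∨ v = a ∨ v = b := by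
    obtain ⟨x, y, z, h⟩ := petersen_neighbors n 2 w₁
    rcases h w₂ hadj with rfl | rfl | rfl
    · exact ⟨y, z, h⟩
    · exact ⟨x, z, fun v hv => by have := h v hv; tauto⟩
    · exact ⟨x, y, fun v hv => by have := h v hv; tauto⟩
  have hR := isRDF_shift hf.1 hadj hw₂ hN
  have hγ : IsGammaRFun (petersen n 2) (shift f w₁ a b) := by
    refine ⟨hR, le_antisymm ?_ (Nat.sInf_le ⟨_, hR, rfl⟩)⟩
    rw [← hf.2]
    exact weight_shift_le hw₁ a b
  refine (hmin _ hγ).not_gt (Set.ncard_lt_ncard ?_ (Set.toFinite _))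
  refine (Set.ssubset_iff_of_subset fun v hv => ?_).2 ⟨w₁, hw₁, ?_⟩
  · exact ((shift_eq_two_iff ..).1 hv).2
  · simp [shift_self]
end

section
/- Let n ≥ 5 and let f be a γ_R-function of the generalized Petersen graph P(n,2) with minimum cardinality of V₂ (i.e. |V₂| ≤ |V₂′| for every γ_R-function f′ of P(n,2)). Define g_f on vertices by g_f(w) = 1/2 if w ∈ V₂, g_f(w) = 1 if w ∈ V₁, and g_f(w) = (1/2)·|N(w) ∩ V₂| if w ∈ V₀. Then Σ_{v ∈ V(P(n,2))} g_f(v) = γ_R(P(n,2)). -/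
theorem romanDomNum_le {V : Type*} {G : SimpleGraph V} {f : V → ℕ} (hf : IsRDF G f) :
    romanDomNum G ≤ weight f :=
  Nat.sInf_le ⟨f, hf, rfl⟩

/-- In a `γ_R`-function `V₁` and `V₂` are not joined: a vertex of value `1` next to one of value `2`
could be lowered to `0`. -/
theorem no_one_two_edge {V : Type*} [Fintype V] {G : SimpleGraph V} {f : V → ℕ}
    (hf : IsGammaRFun G f) {v x : V} (hv : f v = 1) (hx : f x = 2) : ¬ G.Adj v x := by
  classical
  intro hvx
  have hrdf : IsRDF G (Function.update f v 0) := by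
    refine ⟨fun w => ?_, fun w hw => ?_⟩
    · by_cases h : w = v
      · simp [h]
      · simpa [h] using hf.1.1 w
    · by_cases h : w = v
      · subst h
        exact ⟨x, hvx, by simp [hvx.ne', hx]⟩
      · rw [Function.update_of_ne h] at hw
        obtain ⟨u, hu, hu2⟩ := hf.1.2 w hw
        have huv : u ≠ v := by rintro rfl; omega
        exact ⟨u, hu, by simp [huv, hu2]⟩
  have hle := romanDomNum_le hrdf
  rw [← hf.2, weight, weight, finsum_eq_sum_of_fintype, finsum_eq_sum_of_fintype] at hle
  refine absurd hle (not_le.2 (Finset.sum_lt_sum (fun w _ => ?_) ⟨v, Finset.mem_univ _, ?_⟩))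
  · by_cases h : w = v
    · simp [h]
    · simp [h]
  · simp [hv]

/-- On a cubic graph, minimality of `|V₂|` makes `V₂` independent: the `2` units saved at `v` pay for
raising its at most two neighbours of value `0` to `1`. -/
theorem no_two_two_edge {V : Type*} [Fintype V] {G : SimpleGraph V} {f : V → ℕ}
    (hf : IsGammaRFun G f)
    (hmin : ∀ f' : V → ℕ, IsGammaRFun G f' → {v | f v = 2}.ncard ≤ {v | f' v = 2}.ncard)
    (hdeg : ∀ v, (G.neighborSet v).ncard = 3) {v x : V} (hv : f v = 2) (hx : f x = 2) :
    ¬ G.Adj v x := by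
  classical
  intro hvx
  let f' : V → ℕ := fun w => if w = v then 0 else if G.Adj v w ∧ f w = 0 then 1 else f w
  have hf' : ∀ w, f' w = if w = v then 0 else if G.Adj v w ∧ f w = 0 then 1 else f w :=
    fun _ => rfl
  have htwo : ∀ u, u ≠ v → f u = 2 → f' u = 2 := by
    intro u huv hu
    simp [hf', huv, hu]
  have hrdf : IsRDF G f' := by
    refine ⟨fun w => ?_, fun w hw => ?_⟩
    · have := hf.1.1 w
      rw [hf']
      split_ifs <;> omega
    · by_cases h : w = v
      · subst h
        exact ⟨x, hvx, htwo x hvx.ne' hx⟩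
      · by_cases h2 : G.Adj v w ∧ f w = 0
        · simp [hf', h, h2] at hw
        · simp only [hf', if_neg h, if_neg h2] at hw
          obtain ⟨u, hu, hu2⟩ := hf.1.2 w hw
          refine ⟨u, hu, htwo u ?_ hu2⟩
          rintro rfl
          exact h2 ⟨hu.symm, hw⟩
  -- The raised vertices lie in `N(v) \ {x}`, which has two elements.
  have hcard : (Finset.univ.filter fun w => G.Adj v w ∧ f w = 0).card ≤ 2 := by
    have hsub : (Finset.univ.filter fun w => G.Adj v w ∧ f w = 0) ⊆
        (G.neighborSet v).toFinset.erase x := by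
      intro w hw
      simp only [Finset.mem_filter, Finset.mem_univ, true_and] at hw
      simp only [Finset.mem_erase, Set.mem_toFinset, SimpleGraph.mem_neighborSet]
      refine ⟨?_, hw.1⟩
      rintro rfl
      omega
    have h3 := hdeg v
    rw [Set.ncard_eq_toFinset_card'] at h3
    have := Finset.card_le_card hsub
    rw [Finset.card_erase_of_mem (by simpa using hvx), h3] at this
    exact this
  have hsum : weight f' ≤ weight f := by
    have key : ∑ w, f' w + ∑ w, (if w = v then 2 else 0) ≤
        ∑ w, f w + ∑ w, (if G.Adj v w ∧ f w = 0 then 1 else 0) := by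
      rw [← Finset.sum_add_distrib, ← Finset.sum_add_distrib]
      refine Finset.sum_le_sum fun w _ => ?_
      rw [hf']
      by_cases h : w = v
      · subst h; simp [hv]
      · simp only [if_neg h]
        split_ifs <;> omega
    rw [Finset.sum_ite_eq' Finset.univ v, ← Finset.card_filter] at key
    simp only [Finset.mem_univ, if_true] at key
    rw [weight, weight, finsum_eq_sum_of_fintype, finsum_eq_sum_of_fintype]
    omega
  have hgamma : IsGammaRFun G f' :=
    ⟨hrdf, le_antisymm (hsum.trans hf.2.le) (romanDomNum_le hrdf)⟩
  refine absurd (hmin f' hgamma) (not_le.2 (Set.ncard_lt_ncard ?_ (Set.toFinite _)))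
  refine ⟨fun w hw => ?_, fun hss => ?_⟩
  · have hw' : f' w = 2 := hw
    change f w = 2
    rw [hf'] at hw'
    split_ifs at hw' <;> omega
  · have : f' v = 2 := hss hv
    simp [hf'] at this

/-- `P(n,2)` is cubic. The hypothesis `n ≥ 5` makes `1`, `2` and `4` nonzero modulo `n`, so that
`i`, `i ± 1` and `i ± 2` are distinct as needed. -/
theorem petersen_two_ncard_neighborSet (n : ℕ) (hn : 5 ≤ n) (w : ZMod n ⊕ ZMod n) :
    ((petersen n 2).neighborSet w).ncard = 3 := by
  have hne : ∀ m : ℕ, 0 < m → m < 5 → (m : ZMod n) ≠ 0 := by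
    intro m h0 h5 h
    have := Nat.le_of_dvd h0 ((ZMod.natCast_eq_zero_iff m n).1 h)
    omega
  have h1 : (1 : ZMod n) ≠ 0 := by exact_mod_cast hne 1 (by norm_num) (by norm_num)
  have h2 : (2 : ZMod n) ≠ 0 := by exact_mod_cast hne 2 (by norm_num) (by norm_num)
  have h4 : (4 : ZMod n) ≠ 0 := by exact_mod_cast hne 4 (by norm_num) (by norm_num)
  rcases w with i | i
  · have : (petersen n 2).neighborSet (Sum.inl i) =
        {Sum.inl (i + 1), Sum.inl (i - 1), Sum.inr i} := by
      ext (j | j)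
      · simp only [petersen, SimpleGraph.mem_neighborSet, SimpleGraph.fromRel_adj,
          Set.mem_insert_iff, Set.mem_singleton_iff, Sum.inl.injEq, ne_eq, reduceCtorEq, or_false]
        grind
      · simp [petersen, eq_comm]
    rw [this, Set.ncard_eq_three]
    refine ⟨_, _, _, ?_, by simp, by simp, rfl⟩
    rw [ne_eq, Sum.inl.injEq]
    intro h
    exact h2 (by linear_combination h)
  · have : (petersen n 2).neighborSet (Sum.inr i) =
        {Sum.inr (i + 2), Sum.inr (i - 2), Sum.inl i} := by
      ext (j | j)
      · simp [petersen, eq_comm]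
      · simp only [petersen, SimpleGraph.mem_neighborSet, SimpleGraph.fromRel_adj, Nat.cast_ofNat,
          Set.mem_insert_iff, Set.mem_singleton_iff, Sum.inr.injEq, ne_eq, reduceCtorEq, or_false]
        grind
    rw [this, Set.ncard_eq_three]
    refine ⟨_, _, _, ?_, by simp, by simp, rfl⟩
    rw [ne_eq, Sum.inr.injEq]
    intro h
    exact h4 (by linear_combination h)

/-- For a `γ_R`-function `f` of `P(n,2)` (`n ≥ 5`) with minimum cardinality of
`V₂`, the sum of `g_f` over all vertices equals `γ_R(P(n,2))`. -/
theorem gf_total_eq_roman_domination_number (n : ℕ) (hn : 5 ≤ n)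
    (f : ZMod n ⊕ ZMod n → ℕ) (hf : IsGammaRFun (petersen n 2) f)
    (hmin : MinV2 n f) :
    ∑ᶠ v, gf n f v = (romanDomNum (petersen n 2) : ℚ) := by
  classical
  have : NeZero n := ⟨by omega⟩
  have hdeg := petersen_two_ncard_neighborSet n hn
  have h12 : ∀ v x, f v = 1 → f x = 2 → ¬ (petersen n 2).Adj v x :=
    fun v x hv hx => no_one_two_edge hf hv hx
  have h22 : ∀ v x, f v = 2 → f x = 2 → ¬ (petersen n 2).Adj v x :=
    fun v x hv hx => no_two_two_edge hf hmin hdeg hv hx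
  -- The sum over `u` may be included for every `w`, since it vanishes unless `f w = 0`.
  have hg : ∀ w, gf n f w = (if f w = 2 then 1/2 else 0) + (if f w = 1 then 1 else 0) +
      1/2 * ∑ u, (if (petersen n 2).Adj w u ∧ f u = 2 then (1 : ℚ) else 0) := by
    intro w
    have hzero : (f w = 1 ∨ f w = 2) →
        ∑ u, (if (petersen n 2).Adj w u ∧ f u = 2 then (1 : ℚ) else 0) = 0 := by
      intro hw
      refine Finset.sum_eq_zero fun u _ => if_neg ?_
      rintro ⟨ha, hu⟩
      rcases hw with hw | hw
      · exact h12 w u hw hu ha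
      · exact h22 w u hw hu ha
    rw [gf]
    by_cases hw2 : f w = 2
    · rw [hzero (Or.inr hw2)]; simp [hw2]
    by_cases hw1 : f w = 1
    · rw [hzero (Or.inl hw1)]; simp [hw1]
    simp only [if_neg hw2, if_neg hw1, zero_add]
    congr 1
    rw [Set.ncard_eq_toFinset_card', Finset.sum_boole]
    congr 2
    ext u
    simp
  -- The edges into `V₂`, counted from the end in `V₂`.
  have hswap : ∑ w, ∑ u, (if (petersen n 2).Adj w u ∧ f u = 2 then (1 : ℚ) else 0) =
      ∑ u, (if f u = 2 then 3 else 0) := by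
    rw [Finset.sum_comm]
    refine Finset.sum_congr rfl fun u _ => ?_
    by_cases hu : f u = 2
    · have h3 := hdeg u
      rw [Set.ncard_eq_toFinset_card'] at h3
      simp only [hu, and_true, if_true]
      rw [Finset.sum_boole, show (3 : ℚ) = ((3 : ℕ) : ℚ) by norm_num, ← h3]
      congr 2
      ext w
      simp [SimpleGraph.adj_comm]
    · simp [hu]
  rw [← hf.2, weight, finsum_eq_sum_of_fintype, finsum_eq_sum_of_fintype,
    Finset.sum_congr rfl fun w _ => hg w, Finset.sum_add_distrib, ← Finset.mul_sum, hswap,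
    Finset.mul_sum, ← Finset.sum_add_distrib, Nat.cast_sum]
  refine Finset.sum_congr rfl fun w _ => ?_
  have hle := hf.1.1 w
  interval_cases f w <;> norm_num
end

section
/- Let n ≥ 5, let f be a γ_R-function of the generalized Petersen graph P(n,2) with minimum cardinality of V₂, and let i be an integer. If r_f(V′(i,7)) ≤ 1/2, then v_{i+3} ∉ V₂ (indices modulo n). -/
/-! ### Surgery on minimal Roman domination functions -/

section Surgery

variable {V : Type*} {G : SimpleGraph V} {f : V → ℕ}

lemma IsGammaRFun.weight_le (hf : IsGammaRFun G f) {f' : V → ℕ} (hf' : IsRDF G f') :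
    weight f ≤ weight f' := by
  rw [hf.2]
  exact Nat.sInf_le ⟨f', hf', rfl⟩

variable [Fintype V]

lemma weight_eq_sum_s10 (f : V → ℕ) : weight f = ∑ v, f v :=
  finsum_eq_sum_of_fintype f

lemma IsGammaRFun.ne_one_of_adj (hf : IsGammaRFun G f) {x y : V} (hxy : G.Adj x y)
    (hx : f x = 2) : f y ≠ 1 := by
  classical
  intro hy
  have hR : IsRDF G (Function.update f y 0) := by
    refine ⟨fun v => ?_, fun v hv => ?_⟩
    · have := hf.1.1 v
      by_cases h : v = y <;> simp [h, this]
    · by_cases h : v = y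
      · subst h
        exact ⟨x, hxy.symm, by simp [hxy.ne, hx]⟩
      · simp only [Function.update_apply, h, if_false] at hv
        obtain ⟨u, hu, hu2⟩ := hf.1.2 v hv
        have : u ≠ y := by rintro rfl; omega
        exact ⟨u, hu, by simp [this, hu2]⟩
  have hle := hf.weight_le hR
  rw [weight_eq_sum_s10, weight_eq_sum_s10] at hle
  refine absurd hle (not_le.2 (Finset.sum_lt_sum (fun v _ => ?_) ⟨y, Finset.mem_univ y, ?_⟩))
  · by_cases h : v = y <;> simp [h]
  · simp [hy]

/-- In a `γ_R`-function with `|V₂|` minimum, a vertex of degree at most three in `V₂` has no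
neighbour in `V₂`. -/
lemma ne_two_of_adj (hf : IsGammaRFun G f)
    (hmin : ∀ f' : V → ℕ, IsGammaRFun G f' → {v | f v = 2}.ncard ≤ {v | f' v = 2}.ncard)
    {x y p q : V} (hxy : G.Adj x y) (hN : ∀ w, G.Adj x w → w = y ∨ w = p ∨ w = q)
    (hx : f x = 2) : f y ≠ 2 := by
  classical
  intro hy
  set f' : V → ℕ := fun w => if w = x then 0 else if w = p ∨ w = q then max (f w) 1 else f w
    with hf'
  have hx0 : f' x = 0 := by simp [hf']
  have h2 : ∀ w, w ≠ x → (f' w = 2 ↔ f w = 2) := by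
    intro w hw
    simp only [hf', hw, if_false]
    split_ifs <;> omega
  have hR : IsRDF G f' := by
    refine ⟨fun v => ?_, fun v hv => ?_⟩
    · have := hf.1.1 v
      simp only [hf']
      split_ifs <;> omega
    · by_cases h : v = x
      · subst h
        exact ⟨y, hxy, (h2 y hxy.ne').2 hy⟩
      · have hpq : ¬ (v = p ∨ v = q) := by
          intro hpq
          simp only [hf', h, hpq, if_true, if_false] at hv
          omega
        have hv0 : f v = 0 := by simpa only [hf', h, hpq, if_false] using hv
        obtain ⟨u, hu, hu2⟩ := hf.1.2 v hv0
        have hux : u ≠ x := by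
          rintro rfl
          rcases hN v hu.symm with rfl | h
          · omega
          · exact hpq h
        exact ⟨u, hu, (h2 u hux).2 hu2⟩
  have hw : weight f' ≤ weight f := by
    rw [weight_eq_sum_s10, weight_eq_sum_s10]
    have key : ∑ w, (f' w + if w = x then 2 else 0)
        ≤ ∑ w, (f w + (if w = p then 1 else 0) + if w = q then 1 else 0) := by
      refine Finset.sum_le_sum fun w _ => ?_
      simp only [hf']
      by_cases h1 : w = x
      · subst h1
        simp [hx]
        omega
      · simp only [h1, if_false]
        split_ifs <;> first | omega | (exfalso; tauto)
    simp only [Finset.sum_add_distrib, Finset.sum_ite_eq', Finset.mem_univ, if_true] at key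
    omega
  have hg : IsGammaRFun G f' := ⟨hR, le_antisymm (hw.trans_eq hf.2) (Nat.sInf_le ⟨f', hR, rfl⟩)⟩
  refine absurd (hmin f' hg) (not_le.2 (Set.ncard_lt_ncard ?_ (Set.toFinite _)))
  refine ⟨fun w hw => ?_, fun hsub => ?_⟩
  · have hwx : w ≠ x := by
      rintro rfl
      simp [hx0] at hw
    exact (h2 w hwx).1 hw
  · have : f' x = 2 := hsub hx
    omega

end Surgery

/-! ### The local case analysis -/

/-- The constraints on the values `a j`, `b j` of `v_{c+j}`, `u_{c+j}` and on the corresponding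
values `ra j`, `rb j` of `r_f`, in columns indexed by `ℤ` relative to a centre `c`. Columnwise, only lower
bounds for `ra`, `rb` are recorded; in `ra_two` and `rb_two` the three indicators count the
neighbours in `V₂`. -/
structure LocalData (a b : ℤ → ℕ) (ra rb : ℤ → ℚ) : Prop where
  a_le : ∀ j, a j ≤ 2
  b_le : ∀ j, b j ≤ 2
  a_dom : ∀ j, a j = 0 → a (j + 1) = 2 ∨ a (j - 1) = 2 ∨ b j = 2
  b_dom : ∀ j, b j = 0 → a j = 2 ∨ b (j + 2) = 2 ∨ b (j - 2) = 2
  a_nbr : ∀ j, a j = 2 → a (j + 1) = 0 ∧ a (j - 1) = 0 ∧ b j = 0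
  b_nbr : ∀ j, b j = 2 → a j = 0 ∧ b (j + 2) = 0 ∧ b (j - 2) = 0
  ra_nonneg : ∀ j, 0 ≤ ra j
  rb_nonneg : ∀ j, 0 ≤ rb j
  ra_one : ∀ j, a j = 1 → 1 / 2 ≤ ra j
  rb_one : ∀ j, b j = 1 → 1 / 2 ≤ rb j
  ra_two : ∀ j, a j = 0 → 1 / 2 * ((if a (j + 1) = 2 then 1 else 0)
    + (if a (j - 1) = 2 then 1 else 0) + (if b j = 2 then 1 else 0)) - 1 / 2 ≤ ra j
  rb_two : ∀ j, b j = 0 → 1 / 2 * ((if a j = 2 then 1 else 0)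
    + (if b (j + 2) = 2 then 1 else 0) + (if b (j - 2) = 2 then 1 else 0)) - 1 / 2 ≤ rb j
  sum_le : ∀ m : ℤ, -3 ≤ m → m ≤ -1 →
    ∑ k ∈ Finset.range 5, ra (m + k) + ∑ k ∈ Finset.range 5, rb (m + k) ≤ 1 / 2

namespace LocalData

variable {a b : ℤ → ℕ} {ra rb : ℤ → ℚ}

/-- The reflection of the columns about the centre. -/
lemma reflect (h : LocalData a b ra rb) :
    LocalData (fun j => a (-j)) (fun j => b (-j)) (fun j => ra (-j)) (fun j => rb (-j)) where
  a_le j := h.a_le _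
  b_le j := h.b_le _
  a_dom j hj := by
    have := h.a_dom (-j) hj
    rw [show -(j + 1) = -j - 1 by ring, show -(j - 1) = -j + 1 by ring]
    tauto
  b_dom j hj := by
    have := h.b_dom (-j) hj
    rw [show -(j + 2) = -j - 2 by ring, show -(j - 2) = -j + 2 by ring]
    tauto
  a_nbr j hj := by
    have := h.a_nbr (-j) hj
    rw [show -(j + 1) = -j - 1 by ring, show -(j - 1) = -j + 1 by ring]
    tauto
  b_nbr j hj := by
    have := h.b_nbr (-j) hj
    rw [show -(j + 2) = -j - 2 by ring, show -(j - 2) = -j + 2 by ring]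
    tauto
  ra_nonneg j := h.ra_nonneg _
  rb_nonneg j := h.rb_nonneg _
  ra_one j hj := h.ra_one _ hj
  rb_one j hj := h.rb_one _ hj
  ra_two j hj := by
    have := h.ra_two (-j) hj
    rw [show -(j + 1) = -j - 1 by ring, show -(j - 1) = -j + 1 by ring]
    linarith
  rb_two j hj := by
    have := h.rb_two (-j) hj
    rw [show -(j + 2) = -j - 2 by ring, show -(j - 2) = -j + 2 by ring]
    linarith
  sum_le m h1 h2 := by
    have := h.sum_le (-m - 4) (by omega) (by omega)
    simp only [Finset.sum_range_succ, Finset.sum_range_zero] at this ⊢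
    push_cast at this ⊢
    ring_nf at this ⊢
    linarith

/-- The excess of `u_c` caused by `u_{c-2}` and `u_{c+2}` when `v_c ∈ V₂`. -/
lemma rb_zero_ge (h : LocalData a b ra rb) (h0 : a 0 = 2) :
    (if b 2 = 2 then 1 / 2 else 0) + (if b (-2) = 2 then 1 / 2 else 0) ≤ rb 0 := by
  have := h.rb_two 0 (h.a_nbr 0 h0).2.2
  norm_num [h0] at this ⊢
  split_ifs at this ⊢ <;> linarith

/-- If `v_c` is in `V₂`, the columns `1` and `2` hold a defect, or `u_{c+2}` causes one at `u_c`,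
as soon as `v_{c+3} ∉ V₂`. -/
lemma right_defect (h : LocalData a b ra rb) (h0 : a 0 = 2) (h3 : a 3 ≠ 2) :
    1 / 2 ≤ ra 1 + ra 2 + (if b 2 = 2 then 1 / 2 else 0) := by
  have n1 := h.ra_nonneg 1
  have n2 := h.ra_nonneg 2
  have ha1 : a 1 = 0 := by simpa using (h.a_nbr 0 h0).1
  have hle := h.a_le 2
  by_cases hb : b 2 = 2
  · simp [hb]
    linarith
  rcases (by omega : a 2 = 0 ∨ a 2 = 1 ∨ a 2 = 2) with h2 | h2 | h2
  · have := h.a_dom 2 h2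
    norm_num [ha1, hb, h3] at this
  · have := h.ra_one 2 h2
    simp [hb]
    linarith
  · have := h.ra_two 1 ha1
    have hn := h.a_nbr 2 h2
    norm_num [h0, h2] at this
    split_ifs at this <;> simp [hb] <;> linarith

/-- The right half contributes a defect whenever `u_{c+3} ∈ V₂`, since then `v_{c+3} ∉ V₂`. -/
lemma right_defect_of_inner (h : LocalData a b ra rb) (h0 : a 0 = 2) (h3 : b 3 = 2) :
    1 / 2 ≤ ra 1 + ra 2 + (if b 2 = 2 then 1 / 2 else 0) :=
  h.right_defect h0 (by have := (h.b_nbr 3 h3).1; omega)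

/-- If `v_c ∈ V₂` and `u_{c-1} ∉ V₂`, then `u_{c+1}` is in `V₂`, or is a defect because it has
value `1`, or has value `0` and can only be dominated by `u_{c+3}`. -/
lemma inner_cases (h : LocalData a b ra rb) (h0 : a 0 = 2) (hb : b (-1) ≠ 2) :
    b 1 = 2 ∨ 1 / 2 ≤ rb 1 ∨ b 3 = 2 := by
  have ha1 : a 1 = 0 := by simpa using (h.a_nbr 0 h0).1
  have hle := h.b_le 1
  rcases (by omega : b 1 = 0 ∨ b 1 = 1 ∨ b 1 = 2) with h1 | h1 | h1
  · have := h.b_dom 1 h1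
    norm_num [ha1, hb] at this
    exact Or.inr (Or.inr this)
  · exact Or.inr (Or.inl (h.rb_one 1 h1))
  · exact Or.inl h1

/-- If `v_c` and `u_{c+1}` are both in `V₂` then `v_{c+1}` is a defect, and the right half has
another one: if `v_{c+3} ∈ V₂`, then `u_{c+3}` has two neighbours in `V₂`, and otherwise every
admissible value of `v_{c+2}` costs a further half. -/
lemma inner_ne_two (h : LocalData a b ra rb) (h0 : a 0 = 2) : b 1 ≠ 2 := by
  intro h1
  have ha1 : a 1 = 0 := by simpa using (h.a_nbr 0 h0).1
  have hb3 : b 3 = 0 := by simpa using (h.b_nbr 1 h1).2.1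
  have n1 := h.ra_nonneg
  have n2 := h.rb_nonneg
  have t1 := h.ra_two 1 ha1
  have t3 := h.rb_two 3 hb3
  have z := h.rb_zero_ge h0
  have s := h.sum_le (-1) (by norm_num) (by norm_num)
  simp only [Finset.sum_range_succ, Finset.sum_range_zero] at s
  norm_num [h0, h1] at t1 t3 s
  have := n1 (-1)
  have := n1 0
  have := n1 1
  have := n1 2
  have := n1 3
  have := n2 (-1)
  have := n2 0
  have := n2 1
  have := n2 2
  have := n2 3
  have hz : (0 : ℚ) ≤ if b (-2) = 2 then 1 / 2 else 0 := by split_ifs <;> norm_num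
  by_cases h3 : a 3 = 2
  · have e1 : (0 : ℚ) ≤ if a 2 = 2 then 1 else 0 := by split_ifs <;> norm_num
    have e2 : (0 : ℚ) ≤ if b 5 = 2 then 1 else 0 := by split_ifs <;> norm_num
    simp only [h3, if_true] at t3
    linarith
  · have hle := h.a_le 2
    rcases (by omega : a 2 = 0 ∨ a 2 = 1 ∨ a 2 = 2) with h2 | h2 | h2
    · have hd := h.a_dom 2 h2
      norm_num [ha1, h3] at hd
      simp only [h2, hd, if_true] at t1 z
      norm_num at t1
      linarith
    · have := h.ra_one 2 h2
      simp only [h2] at t1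
      norm_num at t1
      linarith
    · simp only [h2, if_true] at t1
      linarith

theorem center_ne_two (h : LocalData a b ra rb) : a 0 ≠ 2 := by
  intro h0
  have hr := h.reflect
  have h0' : (fun j => a (-j)) 0 = 2 := by simpa using h0
  have R1 := h.inner_ne_two h0
  have L1 := hr.inner_ne_two h0'
  have R := h.inner_cases h0 L1
  have L := hr.inner_cases h0' (by simpa using R1)
  have z := h.rb_zero_ge h0
  have s := h.sum_le (-2) (by norm_num) (by norm_num)
  have RD := h.right_defect_of_inner h0
  have LD := hr.right_defect_of_inner h0'
  simp only [Finset.sum_range_succ, Finset.sum_range_zero] at s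
  norm_num at s R L L1 RD LD
  have n1 := h.ra_nonneg
  have n2 := h.rb_nonneg
  have := n1 (-2)
  have := n1 (-1)
  have := n1 0
  have := n1 1
  have := n1 2
  have := n2 (-2)
  have := n2 (-1)
  have := n2 1
  have := n2 2
  have hz : (0 : ℚ) ≤ if b (-2) = 2 then 1 / 2 else 0 := by split_ifs <;> norm_num
  have hz' : (0 : ℚ) ≤ if b 2 = 2 then 1 / 2 else 0 := by split_ifs <;> norm_num
  rcases R with R | R | R
  · exact R1 R
  · rcases L with L | L | L
    · exact L1 L
    · linarith
    · have := LD L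
      linarith
  · have := RD R
    rcases L with L | L | L
    · exact L1 L
    · linarith
    · have := LD L
      linarith

end LocalData

/-! ### Neighbourhoods and excesses in `P(n,2)` -/

section Petersen

variable {n : ℕ} {f : ZMod n ⊕ ZMod n → ℕ}

lemma natCast_ne_zero_of_lt {k : ℕ} (h0 : k ≠ 0) (hk : k < n) : (k : ZMod n) ≠ 0 := by
  rw [Ne, ZMod.natCast_eq_zero_iff]
  exact fun h => absurd (Nat.le_of_dvd (Nat.pos_of_ne_zero h0) h) (by omega)

lemma adj_inl (hn : 5 ≤ n) (y : ZMod n) (w : ZMod n ⊕ ZMod n) :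
    (petersen n 2).Adj (Sum.inl y) w ↔
      w = Sum.inl (y + 1) ∨ w = Sum.inl (y - 1) ∨ w = Sum.inr y := by
  have h1 : (1 : ZMod n) ≠ 0 := by exact_mod_cast natCast_ne_zero_of_lt (k := 1) (by simp) (by omega)
  rcases w with w | w
  · simp only [petersen, SimpleGraph.fromRel_adj, ne_eq, Sum.inl.injEq, reduceCtorEq, or_false]
    constructor
    · rintro ⟨-, h | h⟩
      · exact Or.inl h
      · exact Or.inr (by rw [h]; ring)
    · rintro (h | h)
      · subst h
        exact ⟨by simpa using h1, Or.inl rfl⟩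
      · subst h
        exact ⟨fun h => h1 (by linear_combination h), Or.inr (by ring)⟩
  · simp [petersen, SimpleGraph.fromRel_adj]

lemma adj_inr (hn : 5 ≤ n) (y : ZMod n) (w : ZMod n ⊕ ZMod n) :
    (petersen n 2).Adj (Sum.inr y) w ↔
      w = Sum.inl y ∨ w = Sum.inr (y + 2) ∨ w = Sum.inr (y - 2) := by
  have h2 : (2 : ZMod n) ≠ 0 := by exact_mod_cast natCast_ne_zero_of_lt (k := 2) (by simp) (by omega)
  rcases w with w | w
  · simp [petersen, SimpleGraph.fromRel_adj, eq_comm]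
  · simp only [petersen, SimpleGraph.fromRel_adj, ne_eq, Sum.inr.injEq, reduceCtorEq, false_or,
      Nat.cast_ofNat]
    constructor
    · rintro ⟨-, h | h⟩
      · exact Or.inl h
      · exact Or.inr (by rw [h]; ring)
    · rintro (h | h)
      · subst h
        exact ⟨by simpa using h2, Or.inl rfl⟩
      · subst h
        exact ⟨fun h => h2 (by linear_combination h), Or.inr (by ring)⟩

lemma ncard_triple_inter {α : Type*} {A B C : α} (hAB : A ≠ B) (hAC : A ≠ C) (hBC : B ≠ C)
    (f : α → ℕ) :
    ((({A, B, C} : Set α) ∩ {u | f u = 2}).ncard : ℚ) =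
      (if f A = 2 then 1 else 0) + (if f B = 2 then 1 else 0) + (if f C = 2 then 1 else 0) := by
  classical
  have : (({A, B, C} : Set α) ∩ {u | f u = 2}) =
      ((({A, B, C} : Finset α).filter fun u => f u = 2 : Finset α) : Set α) := by
    ext
    simp
  rw [this, Set.ncard_coe_finset, Finset.card_filter]
  push_cast
  rw [Finset.sum_insert (by simp [hAB, hAC]), Finset.sum_insert (by simp [hBC]),
    Finset.sum_singleton, add_assoc]

lemma gf_inl (hn : 5 ≤ n) {y : ZMod n} (h : f (Sum.inl y) = 0) :
    gf n f (Sum.inl y) = 1 / 2 * ((if f (Sum.inl (y + 1)) = 2 then 1 else 0)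
      + (if f (Sum.inl (y - 1)) = 2 then 1 else 0) + (if f (Sum.inr y) = 2 then 1 else 0)) := by
  have h2 : (2 : ZMod n) ≠ 0 := by exact_mod_cast natCast_ne_zero_of_lt (k := 2) (by simp) (by omega)
  have hN : (petersen n 2).neighborSet (Sum.inl y) =
      {Sum.inl (y + 1), Sum.inl (y - 1), Sum.inr y} := by
    ext w
    simpa using adj_inl hn y w
  have hd : (Sum.inl (y + 1) : ZMod n ⊕ ZMod n) ≠ Sum.inl (y - 1) := by
    rw [Ne, Sum.inl.injEq]
    exact fun h => h2 (by linear_combination h)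
  rw [gf, if_neg (by omega), if_neg (by omega), hN,
    ncard_triple_inter hd (by simp) (by simp)]

lemma gf_inr (hn : 5 ≤ n) {y : ZMod n} (h : f (Sum.inr y) = 0) :
    gf n f (Sum.inr y) = 1 / 2 * ((if f (Sum.inl y) = 2 then 1 else 0)
      + (if f (Sum.inr (y + 2)) = 2 then 1 else 0)
      + (if f (Sum.inr (y - 2)) = 2 then 1 else 0)) := by
  have h4 : (4 : ZMod n) ≠ 0 := by exact_mod_cast natCast_ne_zero_of_lt (k := 4) (by simp) (by omega)
  have hN : (petersen n 2).neighborSet (Sum.inr y) =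
      {Sum.inl y, Sum.inr (y + 2), Sum.inr (y - 2)} := by
    ext w
    simpa using adj_inr hn y w
  have hd : (Sum.inr (y + 2) : ZMod n ⊕ ZMod n) ≠ Sum.inr (y - 2) := by
    rw [Ne, Sum.inr.injEq]
    exact fun h => h4 (by linear_combination h)
  rw [gf, if_neg (by omega), if_neg (by omega), hN,
    ncard_triple_inter (by simp) (by simp) hd]

lemma half_le_gf [NeZero n] (hf : IsRDF (petersen n 2) f) (w : ZMod n ⊕ ZMod n) :
    1 / 2 ≤ gf n f w := by
  rw [gf]
  split_ifs with h2 h1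
  · norm_num
  · norm_num
  · have := hf.1 w
    obtain ⟨u, hu, hu2⟩ := hf.2 w (by omega)
    have hpos : 1 ≤ (((petersen n 2).neighborSet w) ∩ {u | f u = 2}).ncard :=
      (Set.ncard_pos (Set.toFinite _)).2 ⟨u, hu, hu2⟩
    have : (1 : ℚ) ≤ (((petersen n 2).neighborSet w) ∩ {u | f u = 2}).ncard := by
      exact_mod_cast hpos
    linarith

/-- Five consecutive columns are pairwise distinct modulo `n ≥ 5`, so their total excess is at
most that of any block containing them. -/
lemma five_columns_le (hn : 5 ≤ n) (hf : IsRDF (petersen n 2) f) (i m : ℤ) (h1 : i ≤ m)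
    (h2 : m ≤ i + 2) :
    ∑ k ∈ Finset.range 5, (gf n f (Sum.inl ((m + k : ℤ) : ZMod n)) - 1 / 2)
      + ∑ k ∈ Finset.range 5, (gf n f (Sum.inr ((m + k : ℤ) : ZMod n)) - 1 / 2)
      ≤ rfSum n f (Vblock n i 7) := by
  classical
  have : NeZero n := ⟨by omega⟩
  set φ : ℕ → ZMod n := fun k => ((m + k : ℤ) : ZMod n) with hφ
  have hinj : Set.InjOn φ (Finset.range 5) := by
    intro k hk l hl hkl
    simp only [Finset.coe_range, Set.mem_Iio] at hk hl
    have hkl' : (k : ZMod n) = (l : ZMod n) := by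
      simp only [hφ] at hkl
      push_cast at hkl
      exact add_left_cancel hkl
    rw [ZMod.natCast_eq_natCast_iff', Nat.mod_eq_of_lt (by omega), Nat.mod_eq_of_lt (by omega)]
      at hkl'
    exact hkl'
  set T := (Finset.range 5).image (fun k => (Sum.inl (φ k) : ZMod n ⊕ ZMod n)) ∪
    (Finset.range 5).image (fun k => (Sum.inr (φ k) : ZMod n ⊕ ZMod n)) with hT
  have hsum : ∑ w ∈ T, (gf n f w - 1 / 2) =
      ∑ k ∈ Finset.range 5, (gf n f (Sum.inl (φ k)) - 1 / 2)
      + ∑ k ∈ Finset.range 5, (gf n f (Sum.inr (φ k)) - 1 / 2) := by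
    rw [hT, Finset.sum_union, Finset.sum_image, Finset.sum_image]
    · exact fun k hk l hl h => hinj hk hl (Sum.inr_injective h)
    · exact fun k hk l hl h => hinj hk hl (Sum.inl_injective h)
    · rw [Finset.disjoint_left]
      intro w hw hw'
      obtain ⟨k, -, rfl⟩ := Finset.mem_image.1 hw
      obtain ⟨l, -, h⟩ := Finset.mem_image.1 hw'
      exact absurd h (by simp)
  rw [← hsum, rfSum, finsum_mem_eq_finite_toFinset_sum _ (Set.toFinite _)]
  refine Finset.sum_le_sum_of_subset_of_nonneg (fun w hw => ?_)
    (fun w _ _ => by linarith [half_le_gf hf w])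
  rw [Set.Finite.mem_toFinset]
  rcases Finset.mem_union.1 hw with hw | hw <;> obtain ⟨k, hk, rfl⟩ := Finset.mem_image.1 hw <;>
    have hk := Finset.mem_range.1 hk <;>
    refine ⟨m + k, by omega, by push_cast; omega, ?_⟩
  · exact Or.inl rfl
  · exact Or.inr rfl

lemma nbr_eq_zero [NeZero n] (hn : 5 ≤ n) (hf : IsGammaRFun (petersen n 2) f)
    (hmin : MinV2 n f) {x y : ZMod n ⊕ ZMod n} (hxy : (petersen n 2).Adj x y) (hx : f x = 2) :
    f y = 0 := by
  have hy1 := hf.ne_one_of_adj hxy hx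
  have hle := hf.1.1 y
  have hN : ∃ p q, ∀ w, (petersen n 2).Adj x w → w = y ∨ w = p ∨ w = q := by
    rcases x with x | x
    · simp only [adj_inl hn] at hxy ⊢
      rcases hxy with rfl | rfl | rfl
      · exact ⟨_, _, fun w h => h⟩
      · exact ⟨Sum.inl (x + 1), Sum.inr x, fun w h => by tauto⟩
      · exact ⟨Sum.inl (x + 1), Sum.inl (x - 1), fun w h => by tauto⟩
    · simp only [adj_inr hn] at hxy ⊢
      rcases hxy with rfl | rfl | rfl
      · exact ⟨_, _, fun w h => h⟩
      · exact ⟨Sum.inl x, Sum.inr (x - 2), fun w h => by tauto⟩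
      · exact ⟨Sum.inl x, Sum.inr (x + 2), fun w h => by tauto⟩
  obtain ⟨p, q, hN⟩ := hN
  have hy2 := ne_two_of_adj hf hmin hxy hN hx
  omega

lemma localData (hn : 5 ≤ n) (hf : IsGammaRFun (petersen n 2) f) (hmin : MinV2 n f) (i : ℤ)
    (h : rfSum n f (Vblock n i 7) ≤ 1 / 2) :
    LocalData (fun j => f (Sum.inl ((i + 3 + j : ℤ) : ZMod n)))
      (fun j => f (Sum.inr ((i + 3 + j : ℤ) : ZMod n)))
      (fun j => gf n f (Sum.inl ((i + 3 + j : ℤ) : ZMod n)) - 1 / 2)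
      (fun j => gf n f (Sum.inr ((i + 3 + j : ℤ) : ZMod n)) - 1 / 2) := by
  have : NeZero n := ⟨by omega⟩
  have e1 : ∀ j : ℤ, ((i + 3 + (j + 1) : ℤ) : ZMod n) = ((i + 3 + j : ℤ) : ZMod n) + 1 := by
    intro j; push_cast; ring
  have e2 : ∀ j : ℤ, ((i + 3 + (j - 1) : ℤ) : ZMod n) = ((i + 3 + j : ℤ) : ZMod n) - 1 := by
    intro j; push_cast; ring
  have e3 : ∀ j : ℤ, ((i + 3 + (j + 2) : ℤ) : ZMod n) = ((i + 3 + j : ℤ) : ZMod n) + 2 := by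
    intro j; push_cast; ring
  have e4 : ∀ j : ℤ, ((i + 3 + (j - 2) : ℤ) : ZMod n) = ((i + 3 + j : ℤ) : ZMod n) - 2 := by
    intro j; push_cast; ring
  constructor
  case a_le => exact fun j => hf.1.1 _
  case b_le => exact fun j => hf.1.1 _
  case a_dom =>
    intro j hj
    obtain ⟨u, hu, hu2⟩ := hf.1.2 _ hj
    simp only [e1, e2]
    rcases (adj_inl hn _ _).1 hu with rfl | rfl | rfl
    · exact Or.inl hu2
    · exact Or.inr (Or.inl hu2)
    · exact Or.inr (Or.inr hu2)
  case b_dom =>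
    intro j hj
    obtain ⟨u, hu, hu2⟩ := hf.1.2 _ hj
    simp only [e3, e4]
    rcases (adj_inr hn _ _).1 hu with rfl | rfl | rfl
    · exact Or.inl hu2
    · exact Or.inr (Or.inl hu2)
    · exact Or.inr (Or.inr hu2)
  case a_nbr =>
    intro j hj
    simp only [e1, e2]
    exact ⟨nbr_eq_zero hn hf hmin ((adj_inl hn _ _).2 (by simp)) hj,
      nbr_eq_zero hn hf hmin ((adj_inl hn _ _).2 (by simp)) hj,
      nbr_eq_zero hn hf hmin ((adj_inl hn _ _).2 (by simp)) hj⟩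
  case b_nbr =>
    intro j hj
    simp only [e3, e4]
    exact ⟨nbr_eq_zero hn hf hmin ((adj_inr hn _ _).2 (by simp)) hj,
      nbr_eq_zero hn hf hmin ((adj_inr hn _ _).2 (by simp)) hj,
      nbr_eq_zero hn hf hmin ((adj_inr hn _ _).2 (by simp)) hj⟩
  case ra_nonneg => exact fun j => sub_nonneg.2 (half_le_gf hf.1 _)
  case rb_nonneg => exact fun j => sub_nonneg.2 (half_le_gf hf.1 _)
  case ra_one =>
    intro j hj
    rw [gf, if_neg (by omega), if_pos hj]
    norm_num
  case rb_one =>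
    intro j hj
    rw [gf, if_neg (by omega), if_pos hj]
    norm_num
  case ra_two =>
    intro j hj
    simp only [e1, e2]
    rw [gf_inl hn hj]
  case rb_two =>
    intro j hj
    simp only [e3, e4]
    rw [gf_inr hn hj]
  case sum_le =>
    intro m h1 h2
    have := five_columns_le hn hf.1 i (i + 3 + m) (by omega) (by omega)
    simp only [add_assoc] at this ⊢
    exact this.trans h

end Petersen

/-- If `r_f(V'(i,7)) ≤ 1/2`, then `v_{i+3} ∉ V₂`. -/
theorem v_i_add_3_not_in_V2 (n : ℕ) (hn : 5 ≤ n)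
    (f : ZMod n ⊕ ZMod n → ℕ) (hf : IsGammaRFun (petersen n 2) f)
    (hmin : MinV2 n f) (i : ℤ)
    (h : rfSum n f (Vblock n i 7) ≤ 1/2) :
    f (Sum.inl ((i + 3 : ℤ) : ZMod n)) ≠ 2 := by
  simpa using (localData hn hf hmin i h).center_ne_two
end
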